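/- arXiv:1601.06318 — 9 statements merged into one kernel-verified Lean document; each statement's English description precedes it below -/
import Mathlib

section
/- For every positive integer N and all indices 1 ≤ i ≤ k ≤ n+1, the entries of the N-th powers of the matrices A and B satisfy (A^N)_{i,k} = N^{k−i} · A_{i,k} and (B^N)_{i,k} = N^{k−i} · B_{i,k}. -/
/-!
Both matrices are exponentials of matrices supported on the first superdiagonal. Counting indices
from `0`, `A = exp S`, where `S` has a `1` in each position `(i, i + 1)` with `0 < i` and
`i + 1 < n`, and `B = exp C` with `C = E_{0,1} + E_{n-1,n}` and `C ^ 2 = 0`. If `X` is such a matrix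
then `X ^ d` is supported on the `d`-th superdiagonal, so replacing `X` by `N • X` multiplies the
`(i, k)` entry of `exp X` by `N ^ (k - i)`; and `exp (N • X) = (exp X) ^ N`. As only finitely many
factorials need be invertible, the exponential series is cut off where the powers of `X` vanish.
-/

open Finset
open scoped Nat

section TruncExp

variable {E : Type*} [Semiring E] (R : Type*) [CommSemiring R] [Algebra R E]

/-- The exponential series truncated after degree `m`. It is an exponential for elements `x` with
`x ^ (m + 1) = 0`, provided that `m !` is invertible in `R`; otherwise `Ring.inverse` may return the
junk value `0`. -/
noncomputable def truncExp (m : ℕ) (x : E) : E :=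
  ∑ d ∈ range (m + 1), Ring.inverse (d ! : R) • x ^ d

@[simp]
lemma truncExp_zero (m : ℕ) : truncExp R m (0 : E) = 1 := by
  rw [truncExp, sum_eq_single_of_mem 0 (by simp)]
  · simp
  · intro d _ hd
    rw [zero_pow hd, smul_zero]

lemma truncExp_one_left (x : E) : truncExp R 1 x = 1 + x := by
  simp [truncExp, sum_range_succ]

variable {R} {m : ℕ} {x y : E}

lemma inverse_factorial_smul_add_pow {d : ℕ} (hd : IsUnit (d ! : R)) (hxy : Commute x y) :
    Ring.inverse (d ! : R) • (x + y) ^ d = ∑ k ∈ range (d + 1),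
      (Ring.inverse (k ! : R) • x ^ k) * (Ring.inverse ((d - k)! : R) • y ^ (d - k)) := by
  rw [hxy.add_pow', Nat.sum_antidiagonal_eq_sum_range_succ_mk, smul_sum]
  refine sum_congr rfl fun k hk ↦ ?_
  have hmem : (k, d - k) ∈ antidiagonal d :=
    mem_antidiagonal.2 (Nat.add_sub_cancel' (mem_range_succ_iff.1 hk))
  have hchoose : Ring.inverse (d ! : R) * (d.choose k : R) =
      Ring.inverse (k ! : R) * Ring.inverse ((d - k)! : R) := by
    rw [Nat.castChoose_eq hd hmem, mul_assoc, Ring.inverse_mul_cancel_left _ _ hd]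
  rw [smul_mul_smul_comm, ← hchoose, mul_smul, Nat.cast_smul_eq_nsmul]

lemma truncExp_add_of_commute (hm : IsUnit (m ! : R)) (hxy : Commute x y)
    (hzero : ∀ k l, m < k + l → x ^ k * y ^ l = 0) :
    truncExp R m (x + y) = truncExp R m x * truncExp R m y := by
  let term (k l : ℕ) : E := (Ring.inverse (k ! : R) • x ^ k) * (Ring.inverse (l ! : R) • y ^ l)
  calc truncExp R m (x + y)
      = ∑ d ∈ range (m + 1), ∑ k ∈ range (d + 1), term k (d - k) :=
        sum_congr rfl fun d hd ↦ inverse_factorial_smul_add_pow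
          (hm.natCast_factorial_of_le (mem_range_succ_iff.1 hd)) hxy
    _ = ∑ k ∈ range (m + 1), ∑ l ∈ range (m + 1 - k), term k l := sum_range_diag_flip _ term
    _ = ∑ k ∈ range (m + 1), ∑ l ∈ range (m + 1), term k l := by
        refine sum_congr rfl fun k _ ↦ sum_subset (range_mono (Nat.sub_le _ _)) fun l _ hl ↦ ?_
        have hkl : m < k + l := by rw [mem_range] at hl; omega
        simp only [term, smul_mul_smul_comm, hzero k l hkl, smul_zero]
    _ = truncExp R m x * truncExp R m y := (sum_mul_sum _ _ _ _).symm

lemma truncExp_natCast_smul (hm : IsUnit (m ! : R)) (hx : x ^ (m + 1) = 0) (N : ℕ) :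
    truncExp R m ((N : R) • x) = truncExp R m x ^ N := by
  induction N with
  | zero => simp
  | succ N ih =>
    rw [Nat.cast_succ, add_smul, one_smul, pow_succ, ← ih]
    refine truncExp_add_of_commute hm ((Commute.refl x).smul_left _) fun k l hkl ↦ ?_
    rw [smul_pow, smul_mul_assoc, ← pow_add, pow_eq_zero_of_le hkl hx, smul_zero]

end TruncExp

/-- A square matrix all of whose nonzero entries are in positions `(i, i + 1)`. -/
def IsSuperdiagonal {R : Type*} [Zero R] {s : ℕ} (X : Matrix (Fin s) (Fin s) R) : Prop :=
  ∀ i j : Fin s, (j : ℕ) ≠ i + 1 → X i j = 0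

lemma isSuperdiagonal_single {R : Type*} [Zero R] {s : ℕ} {a b : Fin s} (hab : (b : ℕ) = a + 1)
    (c : R) : IsSuperdiagonal (Matrix.single a b c) := by
  refine fun i j hij ↦ Matrix.single_apply_of_ne _ _ _ _ _ ?_
  rintro ⟨rfl, rfl⟩
  exact hij hab

namespace IsSuperdiagonal

lemma add {R : Type*} [AddZeroClass R] {s : ℕ} {X Y : Matrix (Fin s) (Fin s) R}
    (hX : IsSuperdiagonal X) (hY : IsSuperdiagonal Y) : IsSuperdiagonal (X + Y) := by
  intro i j hij
  rw [Matrix.add_apply, hX i j hij, hY i j hij, add_zero]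

lemma pow_apply_eq_zero {R : Type*} [Semiring R] {s : ℕ} {X : Matrix (Fin s) (Fin s) R}
    (hX : IsSuperdiagonal X) {d : ℕ} {i j : Fin s} (hij : (j : ℕ) ≠ i + d) : (X ^ d) i j = 0 := by
  induction d generalizing j with
  | zero => exact Matrix.one_apply_ne fun h ↦ hij (by simp [h])
  | succ d ih =>
    rw [pow_succ, Matrix.mul_apply]
    refine sum_eq_zero fun l _ ↦ ?_
    by_cases hl : (l : ℕ) = i + d
    · rw [hX l j (by omega), mul_zero]
    · rw [ih hl, zero_mul]

variable {R : Type*} [CommSemiring R] {s m : ℕ} {X : Matrix (Fin s) (Fin s) R}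

lemma truncExp_smul_apply (hX : IsSuperdiagonal X) (c : R) (i k : Fin s) :
    truncExp R m (c • X) i k = c ^ ((k : ℕ) - i) * truncExp R m X i k := by
  simp only [truncExp, Matrix.sum_apply, Matrix.smul_apply, smul_pow, smul_eq_mul, mul_sum]
  refine sum_congr rfl fun d _ ↦ ?_
  by_cases hk : (k : ℕ) = i + d
  · rw [hk, Nat.add_sub_cancel_left, mul_left_comm]
  · simp only [hX.pow_apply_eq_zero hk, mul_zero]

lemma truncExp_pow_apply (hX : IsSuperdiagonal X) (hm : IsUnit (m ! : R)) (hnil : X ^ (m + 1) = 0)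
    (N : ℕ) (i k : Fin s) :
    (truncExp R m X ^ N) i k = (N : R) ^ ((k : ℕ) - i) * truncExp R m X i k := by
  rw [← truncExp_natCast_smul hm hnil, hX.truncExp_smul_apply]

lemma truncExp_apply (hX : IsSuperdiagonal X) (hnil : X ^ (m + 1) = 0) {i k : Fin s} (hik : i ≤ k) :
    truncExp R m X i k = Ring.inverse (((k : ℕ) - i)! : R) * (X ^ ((k : ℕ) - i)) i k := by
  simp only [truncExp, Matrix.sum_apply, Matrix.smul_apply, smul_eq_mul]
  refine sum_eq_single _ (fun d _ hd ↦ ?_) fun hd ↦ ?_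
  · rw [hX.pow_apply_eq_zero (by omega), mul_zero]
  · rw [pow_eq_zero_of_le (by rw [mem_range] at hd; omega) hnil, Matrix.zero_apply, mul_zero]

lemma truncExp_apply_of_lt (hX : IsSuperdiagonal X) {i k : Fin s} (hki : k < i) :
    truncExp R m X i k = 0 := by
  simp only [truncExp, Matrix.sum_apply, Matrix.smul_apply, smul_eq_mul]
  refine sum_eq_zero fun d _ ↦ ?_
  rw [hX.pow_apply_eq_zero (by omega), mul_zero]

end IsSuperdiagonal

section IntervalShift

variable (R : Type*) [Semiring R] (s a b : ℕ)

/-- The nilpotent Jordan block on the indices in the closed interval `[a, b]`, extended by zero to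
an `s × s` matrix. -/
def intervalShift : Matrix (Fin s) (Fin s) R :=
  Matrix.of fun i j ↦ if (j : ℕ) = i + 1 ∧ a ≤ i ∧ (j : ℕ) ≤ b then 1 else 0

lemma isSuperdiagonal_intervalShift : IsSuperdiagonal (intervalShift R s a b) :=
  fun _ _ hij ↦ if_neg fun h ↦ hij h.1

variable {R s a b}

lemma intervalShift_pow_apply {d : ℕ} (hd : d ≠ 0) (i j : Fin s) :
    (intervalShift R s a b ^ d) i j =
      if (j : ℕ) = i + d ∧ a ≤ i ∧ (j : ℕ) ≤ b then 1 else 0 := by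
  induction d, Nat.one_le_iff_ne_zero.2 hd using Nat.le_induction generalizing j with
  | base => rw [pow_one]; rfl
  | succ d hd' ih =>
    by_cases hj : (j : ℕ) = i + (d + 1)
    · have hlt : (i : ℕ) + d < s := by omega
      rw [pow_succ, Matrix.mul_apply, sum_eq_single_of_mem ⟨i + d, hlt⟩ (mem_univ _)]
      · rw [ih (by omega), intervalShift, Matrix.of_apply, ite_zero_mul_ite_zero, one_mul]
        exact if_congr (by dsimp only; omega) rfl rfl
      · intro l _ hl
        have hne : (l : ℕ) ≠ i + d := fun h ↦ hl (Fin.ext h)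
        rw [(isSuperdiagonal_intervalShift R s a b).pow_apply_eq_zero hne, zero_mul]
    · rw [(isSuperdiagonal_intervalShift R s a b).pow_apply_eq_zero hj, if_neg fun h ↦ hj h.1]

lemma intervalShift_pow_eq_zero : intervalShift R s a b ^ (b - a + 1) = 0 := by
  ext i j
  rw [intervalShift_pow_apply (Nat.succ_ne_zero _), if_neg (by omega), Matrix.zero_apply]

end IntervalShift

lemma truncExp_intervalShift_apply {R : Type*} [CommSemiring R] {s a b : ℕ} (i j : Fin s) :
    truncExp R (b - a) (intervalShift R s a b) i j =
      if (i : ℕ) = j then 1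
      else if a ≤ i ∧ (i : ℕ) ≤ j ∧ (j : ℕ) ≤ b then Ring.inverse (((j : ℕ) - i)! : R)
      else 0 := by
  have hshift := isSuperdiagonal_intervalShift R s a b
  rcases lt_trichotomy i j with hij | rfl | hji
  · have hdiff : (j : ℕ) - i ≠ 0 := by omega
    rw [hshift.truncExp_apply intervalShift_pow_eq_zero hij.le, intervalShift_pow_apply hdiff,
      mul_ite, mul_one, mul_zero, if_neg (Fin.val_ne_of_ne hij.ne)]
    exact if_congr (by omega) rfl rfl
  · simp [hshift.truncExp_apply intervalShift_pow_eq_zero le_rfl]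
  · rw [hshift.truncExp_apply_of_lt hji, if_neg (by omega), if_neg (by omega)]

lemma single_add_single_sq_eq_zero {R ι : Type*} [Semiring R] [Fintype ι] [DecidableEq ι]
    {i j k l : ι} (hij : j ≠ i) (hjk : j ≠ k) (hli : l ≠ i) (hlk : l ≠ k) (c d : R) :
    (Matrix.single i j c + Matrix.single k l d) ^ 2 = 0 := by
  simp [sq, add_mul, mul_add, hij, hjk, hli, hlk]

theorem stmt_0_general {n : ℕ} (hn : 3 ≤ n) {R : Type*} [CommSemiring R]
    (hunit : IsUnit ((n - 2)! : R))
    (A B : Matrix (Fin (n + 1)) (Fin (n + 1)) R)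
    (hA : ∀ i j : Fin (n + 1), A i j =
      if (i : ℕ) = (j : ℕ) then 1
      else if 0 < (i : ℕ) ∧ (i : ℕ) ≤ (j : ℕ) ∧ (j : ℕ) < n then
        Ring.inverse (((j : ℕ) - (i : ℕ))! : R)
      else 0)
    (hB : B = 1 + Matrix.single (0 : Fin (n + 1)) ⟨1, Nat.succ_lt_succ (Nat.zero_lt_of_lt hn)⟩ 1
            + Matrix.single (⟨n - 1, Nat.sub_lt_succ n 1⟩ : Fin (n + 1)) (Fin.last n) 1)
    (N : ℕ) :
    (∀ i k : Fin (n + 1), (A ^ N) i k = (N : R) ^ ((k : ℕ) - (i : ℕ)) * A i k) ∧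
    (∀ i k : Fin (n + 1), (B ^ N) i k = (N : R) ^ ((k : ℕ) - (i : ℕ)) * B i k) := by
  constructor
  · have hA_exp : A = truncExp R (n - 1 - 1) (intervalShift R (n + 1) 1 (n - 1)) := by
      ext i j
      rw [hA, truncExp_intervalShift_apply]
      simp only [Nat.succ_le_iff, Nat.le_sub_one_iff_lt (by omega : 0 < n)]
    rw [hA_exp]
    exact (isSuperdiagonal_intervalShift R (n + 1) 1 (n - 1)).truncExp_pow_apply hunit
      intervalShift_pow_eq_zero N
  · rw [add_assoc, ← truncExp_one_left R] at hB
    rw [hB]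
    refine IsSuperdiagonal.truncExp_pow_apply (.add ?_ ?_) (by simp) ?_ N
    · exact isSuperdiagonal_single rfl 1
    · exact isSuperdiagonal_single (Nat.sub_add_cancel (Nat.one_le_of_lt hn)).symm 1
    · apply single_add_single_sq_eq_zero <;>
        simp only [Fin.ne_iff_vne, Fin.val_zero, Fin.val_last] <;> omega

theorem stmt_0 {n : ℕ} (hn : 3 ≤ n) {R : Type*} [CommRing R]
    (hunit : IsUnit ((Nat.factorial n : ℕ) : R))
    (A B : Matrix (Fin (n + 1)) (Fin (n + 1)) R)
    (hA : ∀ i j : Fin (n + 1), A i j =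
      if (i : ℕ) = (j : ℕ) then 1
      else if 0 < (i : ℕ) ∧ (i : ℕ) ≤ (j : ℕ) ∧ (j : ℕ) < n then
        Ring.inverse ((Nat.factorial ((j : ℕ) - (i : ℕ)) : ℕ) : R)
      else 0)
    (hB : B = 1 + Matrix.single (⟨0, by omega⟩ : Fin (n + 1)) ⟨1, by omega⟩ 1
            + Matrix.single (⟨n - 1, by omega⟩ : Fin (n + 1)) ⟨n, by omega⟩ 1)
    (N : ℕ) (hN : 0 < N) :
    (∀ i k : Fin (n + 1), (i : ℕ) ≤ (k : ℕ) →
      (A ^ N) i k = (N : R) ^ ((k : ℕ) - (i : ℕ)) * A i k) ∧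
    (∀ i k : Fin (n + 1), (i : ℕ) ≤ (k : ℕ) →
      (B ^ N) i k = (N : R) ^ ((k : ℕ) - (i : ℕ)) * B i k) := by
  have key := stmt_0_general hn (hunit.natCast_factorial_of_le (Nat.sub_le n 2)) A B hA hB N
  exact ⟨fun i k _ ↦ key.1 i k, fun i k _ ↦ key.2 i k⟩
end

section
/- The matrix B is central in V′ modulo Z: for every C ∈ V′, the commutator B C B⁻¹ C⁻¹ lies in Z, i.e., there exists m ∈ R with B C B⁻¹ C⁻¹ = 1 + m·E_{1,n+1}. -/
/-- Membership in the group `U` of upper-triangular `(n+1)×(n+1)` matrices with all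
diagonal entries equal to `1` (indices 0-based). -/
def MemU {n : ℕ} {R : Type*} [CommRing R] (M : Matrix (Fin (n + 1)) (Fin (n + 1)) R) : Prop :=
  (∀ i j : Fin (n + 1), (j : ℕ) < (i : ℕ) → M i j = 0) ∧ (∀ i : Fin (n + 1), M i i = 1)

/-- Membership in `V′`. -/
def MemV {n : ℕ} {R : Type*} [CommRing R] (M : Matrix (Fin (n + 1)) (Fin (n + 1)) R) : Prop :=
  MemU M ∧ ∀ i j : Fin (n + 1), 0 < (i : ℕ) → (j : ℕ) < n → i ≠ j → M i j = 0

/-!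
For `B, C ∈ V′` the difference `B * C - C * B` is unchanged when `B` and `C` are replaced by
`B - 1` and `C - 1`, which are strictly upper triangular and supported on the first row and the
last column. The `(i, j)` entry of a product of two such matrices is a sum over `i < k < j`; since
the middle index `k` is neither first nor last, `i` must be first and `j` last for it to be nonzero.
Hence `B * C = C * B + m E₁,ₙ₊₁ = (1 + m E₁,ₙ₊₁) * (C * B)`, so the whole quotient `V′ / Z` is
abelian, and the given `B` is just one element of `V′`.
-/

open Matrix

section

variable {n : ℕ} {R : Type*} [CommRing R] {B C : Matrix (Fin (n + 1)) (Fin (n + 1)) R}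

theorem MemU.isUnit_det (hC : MemU C) : IsUnit C.det := by
  simp [det_of_isUpperTriangular fun i j hji ↦ hC.1 i j hji, hC.2]

theorem MemU.row_last (hC : MemU C) : C.row (Fin.last n) = Pi.single (Fin.last n) 1 := by
  ext j
  rcases eq_or_ne j (Fin.last n) with rfl | hj
  · simp [hC.2]
  · simp [hj, hC.1 (Fin.last n) j (Fin.val_lt_last hj)]

theorem MemU.single_last_mul (hC : MemU C) (i : Fin (n + 1)) (m : R) :
    single i (Fin.last n) m * C = single i (Fin.last n) m := by
  rw [single_mul_eq_updateRow_zero, hC.row_last, ← Pi.single_smul, smul_eq_mul, mul_one,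
    single_eq_updateRow_zero]

theorem MemU.sub_one_apply_eq_zero (hC : MemU C) {i j : Fin (n + 1)} (hji : j ≤ i) :
    (C - 1) i j = 0 := by
  rcases hji.eq_or_lt with rfl | hji
  · simp [hC.2]
  · simp [hC.1 i j hji, one_apply_ne hji.ne']

theorem MemV.sub_one_apply_eq_zero (hC : MemV C) {i j : Fin (n + 1)} (hi : i ≠ 0)
    (hj : j ≠ Fin.last n) : (C - 1) i j = 0 := by
  rcases eq_or_ne i j with rfl | hij
  · exact hC.1.sub_one_apply_eq_zero le_rfl
  · simp [hC.2 i j (Fin.pos_iff_ne_zero.2 hi) (Fin.val_lt_last hj) hij, hij]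

theorem MemV.exists_sub_one_mul_sub_one_eq_single (hB : MemV B) (hC : MemV C) :
    ∃ m : R, (B - 1) * (C - 1) = single 0 (Fin.last n) m := by
  refine ⟨((B - 1) * (C - 1)) 0 (Fin.last n), ?_⟩
  ext i j
  rw [single_apply]
  split_ifs with hij
  · rw [hij.1, hij.2]
  rw [mul_apply]
  refine Finset.sum_eq_zero fun k _ ↦ ?_
  rcases le_or_gt k i with hki | hik
  · rw [hB.1.sub_one_apply_eq_zero hki, zero_mul]
  rcases le_or_gt j k with hjk | hkj
  · rw [hC.1.sub_one_apply_eq_zero hjk, mul_zero]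
  by_cases hi : i = 0
  · have hj : j ≠ Fin.last n := fun hj ↦ hij ⟨hi.symm, hj.symm⟩
    rw [hC.sub_one_apply_eq_zero (Fin.ne_zero_of_lt hik) hj, mul_zero]
  · rw [hB.sub_one_apply_eq_zero hi (Fin.ne_last_of_lt hkj), zero_mul]

theorem MemV.exists_mul_eq_mul_add_single (hB : MemV B) (hC : MemV C) :
    ∃ m : R, B * C = C * B + single 0 (Fin.last n) m := by
  obtain ⟨x, hx⟩ := hB.exists_sub_one_mul_sub_one_eq_single hC
  obtain ⟨y, hy⟩ := hC.exists_sub_one_mul_sub_one_eq_single hB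
  refine ⟨x - y, ?_⟩
  calc B * C = C * B + ((B - 1) * (C - 1) - (C - 1) * (B - 1)) := by noncomm_ring
    _ = C * B + (single 0 (Fin.last n) x - single 0 (Fin.last n) y) := by rw [hx, hy]
    _ = C * B + single 0 (Fin.last n) (x - y) :=
      congrArg _ (map_sub (singleAddMonoidHom 0 (Fin.last n)) x y).symm

theorem memV_one_add_single_add_single {i j : Fin (n + 1)} (hj : j ≠ 0) (hi : i ≠ Fin.last n)
    (a b : R) : MemV (1 + single 0 j a + single i (Fin.last n) b) := by
  refine ⟨⟨fun k l hlk ↦ ?_, fun k ↦ ?_⟩, fun k l hk hl hkl ↦ ?_⟩ <;>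
    simp only [Matrix.add_apply, one_apply, single_apply] <;> grind

theorem stmt_3_general (hB : MemV B) (hC : MemV C) :
    ∃ m : R, B * C * B⁻¹ * C⁻¹ = 1 + single 0 (Fin.last n) m := by
  obtain ⟨m, hm⟩ := hB.exists_mul_eq_mul_add_single hC
  have mul_eq : B * C = (1 + single 0 (Fin.last n) m) * C * B := by
    rw [add_mul, one_mul, hC.1.single_last_mul, add_mul, hB.1.single_last_mul, hm]
  refine ⟨m, ?_⟩
  rw [mul_eq, mul_nonsing_inv_cancel_right _ _ hB.1.isUnit_det,
    mul_nonsing_inv_cancel_right _ _ hC.1.isUnit_det]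

end

/- STATEMENT 3: `B` is central in `V′` modulo `Z`: for every `C ∈ V′` there is `m ∈ R`
with `B * C * B⁻¹ * C⁻¹ = 1 + m • E_{1,n+1}` (which is `E_{0,n}` in 0-based indices). -/
theorem stmt_3 {n : ℕ} (hn : 3 ≤ n) {R : Type*} [CommRing R]
    (hunit : IsUnit ((Nat.factorial n : ℕ) : R))
    (B : Matrix (Fin (n + 1)) (Fin (n + 1)) R)
    (hB : B = 1 + Matrix.single (⟨0, by omega⟩ : Fin (n + 1)) ⟨1, by omega⟩ 1
            + Matrix.single (⟨n - 1, by omega⟩ : Fin (n + 1)) ⟨n, by omega⟩ 1)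
    (C : Matrix (Fin (n + 1)) (Fin (n + 1)) R) (hC : MemV C) :
    ∃ m : R, B * C * B⁻¹ * C⁻¹ =
      1 + Matrix.single (⟨0, by omega⟩ : Fin (n + 1)) ⟨n, by omega⟩ m := by
  subst hB
  exact stmt_3_general (memV_one_add_single_add_single (by simp [Fin.ext_iff]) (by grind) 1 1) hC
end

section
/- For every C ∈ V′, the commutator of B and C is given explicitly by B C B⁻¹ C⁻¹ = 1 + (C_{2,n+1} − C_{1,n})·E_{1,n+1}. -/
/-! Left multiplication by `E i j` moves row `j` to row `i`, right multiplication moves column `i`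
to column `j`. For `C ∈ V′` the rows and columns moved by `B` are those of the identity matrix up to
one corner entry, so `B * C - C * B` is supported in the corner; and corner matrices are fixed by
right multiplication by `U`, which turns this additive commutator into the multiplicative one. -/

open Matrix

section MatrixUnits

variable {k l m R : Type*} [DecidableEq k] [DecidableEq l]

lemma vecMulVec_single_single [Semiring R] (i : k) (j : l) (a b : R) :
    vecMulVec (Pi.single i a) (Pi.single j b) = single i j (a * b) := by
  ext x y
  simp only [vecMulVec_apply, single_apply, Pi.single_apply, ite_zero_mul_ite_zero, eq_comm]

lemma single_mul_eq_vecMulVec_row [Semiring R] [Fintype l] (i : k) (j : l) (a : R)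
    (M : Matrix l m R) :
    single i j a * M = vecMulVec (Pi.single i a) (M.row j) := by
  rw [← mul_one a, ← vecMulVec_single_single, vecMulVec_mul, single_one_vecMul, mul_one]

lemma mul_single_eq_vecMulVec_col [Semiring R] [Fintype k] (i : k) (j : l) (a : R)
    (M : Matrix m k R) :
    M * single i j a = vecMulVec (M.col i) (Pi.single j a) := by
  rw [← one_mul a, ← vecMulVec_single_single, mul_vecMulVec, mulVec_single_one, one_mul]

lemma single_mul_of_row_eq_single [Semiring R] [Fintype l] {M : Matrix l l R} {j : l}
    (hrow : M.row j = Pi.single j 1) (i : k) (a : R) : single i j a * M = single i j a := by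
  rw [single_mul_eq_vecMulVec_row, hrow, vecMulVec_single_single, mul_one]

lemma mul_single_of_col_eq_single [Semiring R] [Fintype k] {M : Matrix k k R} {i : k}
    (hcol : M.col i = Pi.single i 1) (j : l) (a : R) : M * single i j a = single i j a := by
  rw [mul_single_eq_vecMulVec_col, hcol, vecMulVec_single_single, one_mul]

lemma one_add_single_add_single_mul [Ring R] [Fintype k] {C : Matrix k k R} {s t p q : k}
    (hs : C.col s = Pi.single s 1) (ht : C.row t = Pi.single t 1)
    (hp : C.row p = Pi.single p 1 + Pi.single t (C p t))
    (hq : C.col q = Pi.single q 1 + Pi.single s (C s q)) (a b : R) :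
    (1 + single s p a + single q t b) * C =
      C * (1 + single s p a + single q t b) + single s t (a * C p t - C s q * b) := by
  have row_p_moved : single s p a * C = single s p a + single s t (a * C p t) := by
    simp only [single_mul_eq_vecMulVec_row, hp, vecMulVec_add, vecMulVec_single_single, mul_one]
  have col_q_moved : C * single q t b = single q t b + single s t (C s q * b) := by
    simp only [mul_single_eq_vecMulVec_col, hq, add_vecMulVec, vecMulVec_single_single, one_mul]
  simp only [add_mul, mul_add, one_mul, mul_one, row_p_moved, col_q_moved,
    single_mul_of_row_eq_single ht, mul_single_of_col_eq_single hs, sub_eq_add_neg, single_add,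
    ← single_neg]
  abel

lemma mul_mul_inv_mul_inv_eq_of_mul_eq [CommRing R] [Fintype k] {A B D : Matrix k k R}
    (hA : IsUnit A.det) (hB : IsUnit B.det) (h : A * B = D * (B * A)) :
    A * B * A⁻¹ * B⁻¹ = D := by
  rw [h, ← Matrix.mul_assoc, mul_nonsing_inv_cancel_right _ _ hA,
    mul_nonsing_inv_cancel_right _ _ hB]

end MatrixUnits

section Unitriangular

variable {n : ℕ} {R : Type*} [CommRing R] {M : Matrix (Fin (n + 1)) (Fin (n + 1)) R}

lemma memU_one : MemU (1 : Matrix (Fin (n + 1)) (Fin (n + 1)) R) :=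
  ⟨fun _ _ hji => one_apply_ne (Fin.ne_of_gt hji), fun _ => one_apply_eq _⟩

namespace MemU

lemma add_single (hM : MemU M) {i j : Fin (n + 1)} (hij : i < j) (a : R) :
    MemU (M + single i j a) := by
  refine ⟨fun x y hyx => ?_, fun x => ?_⟩
  · rw [Matrix.add_apply, hM.1 x y hyx, single_apply_of_ne _ _ _ _ _ (by grind), add_zero]
  · rw [Matrix.add_apply, hM.2 x, single_apply_of_ne _ _ _ _ _ (by grind), add_zero]

lemma det_eq_one (hM : MemU M) : M.det = 1 := by
  have upper : M.IsUpperTriangular := fun i j hji => hM.1 i j hji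
  simp only [det_of_isUpperTriangular upper, hM.2, Finset.prod_const_one]

lemma isUnit_det_s4 (hM : MemU M) : IsUnit M.det :=
  hM.det_eq_one ▸ isUnit_one

lemma row_last_s4 (hM : MemU M) : M.row (Fin.last n) = Pi.single (Fin.last n) 1 := by
  ext j
  obtain rfl | hj := eq_or_ne j (Fin.last n)
  · rw [Pi.single_eq_same, row_apply, hM.2]
  · rw [Pi.single_eq_of_ne hj, row_apply, hM.1 _ _ (Fin.lt_last_iff_ne_last.2 hj)]

lemma col_zero (hM : MemU M) : M.col 0 = Pi.single 0 1 := by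
  ext i
  obtain rfl | hi := eq_or_ne i 0
  · rw [Pi.single_eq_same, col_apply, hM.2]
  · rw [Pi.single_eq_of_ne hi, col_apply, hM.1 _ _ (Fin.pos_iff_ne_zero.2 hi)]

end MemU

namespace MemV

lemma row_eq (hM : MemV M) {p : Fin (n + 1)} (hp₀ : 0 < p) (hp : p < Fin.last n) :
    M.row p = Pi.single p 1 + Pi.single (Fin.last n) (M p (Fin.last n)) := by
  ext j
  obtain rfl | hjp := eq_or_ne j p
  · simp [hM.1.2, hp.ne]
  obtain rfl | hj := eq_or_ne j (Fin.last n)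
  · simp [hjp]
  · simp [hjp, hj, hM.2 p j hp₀ (Fin.lt_last_iff_ne_last.2 hj) hjp.symm]

lemma col_eq (hM : MemV M) {q : Fin (n + 1)} (hq₀ : 0 < q) (hq : q < Fin.last n) :
    M.col q = Pi.single q 1 + Pi.single 0 (M 0 q) := by
  ext i
  obtain rfl | hiq := eq_or_ne i q
  · simp [hM.1.2, hq₀.ne']
  obtain rfl | hi := eq_or_ne i 0
  · simp [hiq]
  · simp [hiq, hi, hM.2 i q (Fin.pos_iff_ne_zero.2 hi) hq hiq]

end MemV

end Unitriangular

theorem stmt_4_general {n : ℕ} {R : Type*} [CommRing R] {p q : Fin (n + 1)}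
    (hp₀ : 0 < p) (hp : p < Fin.last n) (hq₀ : 0 < q) (hq : q < Fin.last n) (a b : R)
    {B C : Matrix (Fin (n + 1)) (Fin (n + 1)) R}
    (hB : B = 1 + single 0 p a + single q (Fin.last n) b) (hC : MemV C) :
    B * C * B⁻¹ * C⁻¹ = 1 + single 0 (Fin.last n) (a * C p (Fin.last n) - C 0 q * b) := by
  have hBU : MemU B := hB ▸ (memU_one.add_single hp₀ a).add_single hq b
  refine mul_mul_inv_mul_inv_eq_of_mul_eq hBU.isUnit_det_s4 hC.1.isUnit_det_s4 ?_
  set d := a * C p (Fin.last n) - C 0 q * b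
  calc B * C = C * B + single 0 (Fin.last n) d := by
        rw [hB]
        exact one_add_single_add_single_mul hC.1.col_zero hC.1.row_last_s4 (hC.row_eq hp₀ hp)
          (hC.col_eq hq₀ hq) a b
    _ = C * B + single 0 (Fin.last n) d * C * B := by
        rw [single_mul_of_row_eq_single hC.1.row_last_s4, single_mul_of_row_eq_single hBU.row_last_s4]
    _ = (1 + single 0 (Fin.last n) d) * (C * B) := by
        rw [add_mul, one_mul, Matrix.mul_assoc]

/- STATEMENT 4: for every `C ∈ V′`, the commutator of `B` and `C` is
`B C B⁻¹ C⁻¹ = 1 + (C_{2,n+1} − C_{1,n}) • E_{1,n+1}`; in 0-based indices the entries are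
`C_{1,n}` and `C_{0,n-1}`, and the elementary matrix is `E_{0,n}`. -/
theorem stmt_4 {n : ℕ} (hn : 3 ≤ n) {R : Type*} [CommRing R]
    (hunit : IsUnit ((Nat.factorial n : ℕ) : R))
    (B : Matrix (Fin (n + 1)) (Fin (n + 1)) R)
    (hB : B = 1 + Matrix.single (⟨0, by omega⟩ : Fin (n + 1)) ⟨1, by omega⟩ 1
            + Matrix.single (⟨n - 1, by omega⟩ : Fin (n + 1)) ⟨n, by omega⟩ 1)
    (C : Matrix (Fin (n + 1)) (Fin (n + 1)) R) (hC : MemV C) :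
    B * C * B⁻¹ * C⁻¹ =
      1 + Matrix.single (⟨0, by omega⟩ : Fin (n + 1)) ⟨n, by omega⟩
        (C ⟨1, by omega⟩ ⟨n, by omega⟩ - C ⟨0, by omega⟩ ⟨n - 1, by omega⟩) := by
  have h := stmt_4_general (p := ⟨1, by omega⟩) (q := ⟨n - 1, by omega⟩)
    (by grind) (by grind) (by grind) (by grind) 1 1 hB hC
  rw [one_mul, mul_one] at h
  exact h
end

section
/- Let D be a strictly upper-triangular (n+1)×(n+1) matrix over R satisfying D_{i,j} = 0 whenever i > 1 and j < n+1. Then B·(1+D)·B⁻¹ = 1 + D + (D_{2,n+1} − D_{1,n})·E_{1,n+1}. -/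
/-!
Write `B = 1 + N`. In any ring, `(1 + N) (1 + D) = (1 + D + ⁅N, D⁆) (1 + N)` as soon as
`⁅N, D⁆ N = 0`, so conjugating `1 + D` by `B` merely adds the commutator. For
`N = x E_{a,b} + y E_{c,d}` the zero pattern of `D` leaves a multiple of `E_{a,d}` in that
commutator, and `E_{a,d} N = 0`. Invertibility of `B` comes from its factorization into two
transvections.
-/

open Matrix

theorem one_add_mul_one_add_eq_of_lie_mul_eq_zero {A : Type*} [Ring A] {N D : A}
    (h : ⁅N, D⁆ * N = 0) : (1 + N) * (1 + D) = (1 + D + ⁅N, D⁆) * (1 + N) := by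
  calc (1 + N) * (1 + D) = (1 + D) * (1 + N) + ⁅N, D⁆ := by rw [Ring.lie_def]; noncomm_ring
    _ = (1 + D + ⁅N, D⁆) * (1 + N) := by rw [add_mul (1 + D), mul_add ⁅N, D⁆, h, add_zero, mul_one]

section SingleMul

variable {l m n R : Type*} [DecidableEq l] [DecidableEq m] [DecidableEq n] [Fintype m]
  [NonUnitalNonAssocSemiring R]

theorem single_mul_eq_single_of_row_support (i : l) {j : m} {k : n} (x : R) {M : Matrix m n R}
    (hM : ∀ k', k' ≠ k → M j k' = 0) : single i j x * M = single i k (x * M j k) := by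
  ext i' k'
  by_cases hi : i' = i
  · subst hi
    by_cases hk : k' = k
    · subst hk; simp
    · simp [hM k' hk, Ne.symm hk]
  · simp [hi, Ne.symm hi]

theorem mul_single_eq_single_of_col_support {i : l} {j : m} (k : n) (x : R) {M : Matrix l m R}
    (hM : ∀ i', i' ≠ i → M i' j = 0) : M * single j k x = single i k (M i j * x) := by
  ext i' k'
  by_cases hk : k' = k
  · subst hk
    by_cases hi : i' = i
    · subst hi; simp
    · simp [hM i' hi, Ne.symm hi]
  · simp [hk, Ne.symm hk]

end SingleMul

section TwoSingles

variable {ι R : Type*} [DecidableEq ι] [Fintype ι] {a b c d : ι}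

theorem lie_single_add_single [Ring R] (x y : R) {D : Matrix ι ι R}
    (hcol_a : ∀ i, D i a = 0) (hrow_d : ∀ j, D d j = 0)
    (hrow_b : ∀ j, j ≠ d → D b j = 0) (hcol_c : ∀ i, i ≠ a → D i c = 0) :
    ⁅single a b x + single c d y, D⁆ = single a d (x * D b d - D a c * y) := by
  have single_ab_mul : single a b x * D = single a d (x * D b d) :=
    single_mul_eq_single_of_row_support a x hrow_b
  have single_cd_mul : single c d y * D = 0 := by
    simpa [hrow_d] using single_mul_eq_single_of_row_support (k := d) c y fun j _ ↦ hrow_d j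
  have mul_single_ab : D * single a b x = 0 := by
    simpa [hcol_a] using mul_single_eq_single_of_col_support (i := a) b x fun i _ ↦ hcol_a i
  have mul_single_cd : D * single c d y = single a d (D a c * y) :=
    mul_single_eq_single_of_col_support d y hcol_c
  rw [Ring.lie_def, add_mul, mul_add, single_ab_mul, single_cd_mul, mul_single_ab, mul_single_cd,
    add_zero, zero_add]
  exact (map_sub (singleAddMonoidHom (α := R) a d) _ _).symm

variable [CommRing R]

theorem det_one_add_single_add_single (hab : a ≠ b) (hcd : c ≠ d) (had : a ≠ d) (x y : R) :
    (1 + (single a b x + single c d y)).det = 1 := by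
  have factorization :
      1 + (single a b x + single c d y) = transvection c d y * transvection a b x := by
    simp only [transvection, mul_add, add_mul, one_mul, mul_one,
      single_mul_single_of_ne _ _ _ _ had.symm]
    abel
  rw [factorization, det_mul, det_transvection_of_ne c d hcd, det_transvection_of_ne a b hab,
    one_mul]

theorem stmt_6_general (hab : a ≠ b) (hcd : c ≠ d) (had : a ≠ d) {x y : R} {D : Matrix ι ι R}
    (hcol_a : ∀ i, D i a = 0) (hrow_d : ∀ j, D d j = 0)
    (hrow_b : ∀ j, j ≠ d → D b j = 0) (hcol_c : ∀ i, i ≠ a → D i c = 0) :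
    (1 + single a b x + single c d y) * (1 + D) * (1 + single a b x + single c d y)⁻¹ =
      1 + D + single a d (x * D b d - D a c * y) := by
  rw [add_assoc 1 (single a b x)]
  have lie_eq := lie_single_add_single x y hcol_a hrow_d hrow_b hcol_c
  have lie_mul_eq_zero :
      ⁅single a b x + single c d y, D⁆ * (single a b x + single c d y) = 0 := by
    rw [lie_eq, mul_add, single_mul_single_of_ne _ _ _ _ had.symm,
      single_mul_single_of_ne _ _ _ _ hcd.symm, add_zero]
  have isUnit_det : IsUnit (1 + (single a b x + single c d y)).det := by
    rw [det_one_add_single_add_single hab hcd had]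
    exact isUnit_one
  rw [one_add_mul_one_add_eq_of_lie_mul_eq_zero lie_mul_eq_zero,
    mul_nonsing_inv_cancel_right _ _ isUnit_det, lie_eq]

end TwoSingles

/- STATEMENT 6: if `D` is strictly upper triangular with `D_{i,j} = 0` whenever `i > 1`
and `j < n+1` (1-based; `0 < i`, `j < n` in 0-based indices), then
`B·(1+D)·B⁻¹ = 1 + D + (D_{2,n+1} − D_{1,n})·E_{1,n+1}`, which in 0-based indices reads
`1 + D + (D_{1,n} − D_{0,n-1})·E_{0,n}`. -/
theorem stmt_6 {n : ℕ} (hn : 3 ≤ n) {R : Type*} [CommRing R]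
    (D : Matrix (Fin (n + 1)) (Fin (n + 1)) R)
    (hDtri : ∀ i j : Fin (n + 1), (j : ℕ) ≤ (i : ℕ) → D i j = 0)
    (hDstar : ∀ i j : Fin (n + 1), 0 < (i : ℕ) → (j : ℕ) < n → D i j = 0)
    (B : Matrix (Fin (n + 1)) (Fin (n + 1)) R)
    (hB : B = 1 + Matrix.single (⟨0, by omega⟩ : Fin (n + 1)) ⟨1, by omega⟩ 1
            + Matrix.single (⟨n - 1, by omega⟩ : Fin (n + 1)) ⟨n, by omega⟩ 1) :
    B * (1 + D) * B⁻¹ =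
      1 + D + Matrix.single (⟨0, by omega⟩ : Fin (n + 1)) ⟨n, by omega⟩
        (D ⟨1, by omega⟩ ⟨n, by omega⟩ - D ⟨0, by omega⟩ ⟨n - 1, by omega⟩) := by
  subst hB
  simpa only [one_mul, mul_one] using stmt_6_general (x := 1) (y := 1)
    (Fin.ne_of_val_ne zero_ne_one) (Fin.ne_of_val_ne (by grind)) (Fin.ne_of_val_ne (by grind))
    (fun i ↦ hDtri i _ (Nat.zero_le _)) (fun j ↦ hDtri _ j (Nat.le_of_lt_succ j.isLt))
    (fun j hj ↦ hDstar _ j one_pos (by grind)) (fun i hi ↦ hDstar i _ (by grind) (by grind))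
end

section
/- For every element γ of the commutator subgroup of the free group F on two generators x and y, the matrix φ(γ) lies in V′, i.e., φ(γ)_{i,j} = 0 whenever i > 1, j < n+1, and i ≠ j. -/
/-!
Deleting the first and last rows and columns of upper triangular matrices is multiplicative,
because the remaining indices form an interval. The resulting homomorphism on the free group sends
`y` to the identity, hence has a cyclic image and kills the commutator subgroup. The entries of
`φ γ` with `i > 1` and `j < n + 1` that lie outside this middle block are below the diagonal.
-/

section Commutator

variable {G M : Type*} [Group G] [Monoid M] {S : Set G}

theorem commutator_le_ker_of_commute_of_closure_eq_top (hS : Subgroup.closure S = ⊤) (f : G →* M)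
    (hcomm : ∀ g ∈ S, ∀ h ∈ S, Commute (f g) (f h)) : commutator G ≤ f.ker := by
  rw [← MonoidHom.ker_toHomUnits, commutator_def, Subgroup.commutator_le]
  rintro g - h -
  rw [MonoidHom.mem_ker, map_commutatorElement, commutatorElement_eq_one_iff_commute]
  have hg : g ∈ Subgroup.closure S := hS ▸ Subgroup.mem_top g
  have hh : h ∈ Subgroup.closure S := hS ▸ Subgroup.mem_top h
  induction hg, hh using Subgroup.closure_induction₂ with
  | mem g h hg hh => exact Commute.units_of_val (hcomm g hg h hh)
  | one_left => simp
  | one_right => simp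
  | mul_left _ _ _ _ _ _ h₁ h₂ => simpa only [map_mul] using h₁.mul_left h₂
  | mul_right _ _ _ _ _ _ h₁ h₂ => simpa only [map_mul] using h₁.mul_right h₂
  | inv_left _ _ _ _ h => simpa only [map_inv] using h.inv_left
  | inv_right _ _ _ _ h => simpa only [map_inv] using h.inv_right

end Commutator

section BlockTriangular

variable {R m β : Type*} [CommRing R] [Fintype m] [LinearOrder β] {b : m → β}

theorem toSquareBlockProp_mul_of_blockTriangular {M N : Matrix m m R}
    (hM : M.BlockTriangular b) (hN : N.BlockTriangular b) {s : Set β} (hs : s.OrdConnected)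
    [DecidablePred (b · ∈ s)] :
    (M * N).toSquareBlockProp (b · ∈ s) =
      M.toSquareBlockProp (b · ∈ s) * N.toSquareBlockProp (b · ∈ s) := by
  have houtside : M.toBlock (b · ∈ s) (b · ∉ s) * N.toBlock (b · ∉ s) (b · ∈ s) = 0 := by
    ext i j
    rw [Matrix.mul_apply, Matrix.zero_apply]
    refine Finset.sum_eq_zero fun k _ ↦ ?_
    rcases lt_or_ge (b k) (b i) with hki | hik
    · rw [Matrix.toBlock_apply, hM hki, zero_mul]
    · have hjk : b j < b k := lt_of_not_ge fun hkj ↦ k.2 (hs.out i.2 j.2 ⟨hik, hkj⟩)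
      rw [Matrix.toBlock_apply N, hN hjk, mul_zero]
  simp only [Matrix.toSquareBlockProp]
  rw [Matrix.toBlock_mul_eq_add _ (b · ∈ s), houtside, add_zero]

variable [DecidableEq m]

variable (R b) in
/-- The ring homomorphism that restricts a block triangular matrix to the rows and columns whose
block index lies in the order-connected set `s`. -/
def diagonalBlockHom {s : Set β} (hs : s.OrdConnected) [DecidablePred (b · ∈ s)] :
    Matrix.blockTriangularSubsemiring R b →+* Matrix {i // b i ∈ s} {i // b i ∈ s} R where
  toFun M := (M : Matrix m m R).toSquareBlockProp (b · ∈ s)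
  map_one' := Matrix.toBlock_one_self _
  map_mul' M N := toSquareBlockProp_mul_of_blockTriangular M.2 N.2 hs
  map_zero' := rfl
  map_add' _ _ := rfl

variable {G : Type*} [Group G] {S : Set G} {φ : G →* Matrix m m R}

theorem blockTriangular_map_of_closure_eq_top (hS : Subgroup.closure S = ⊤)
    (htri : ∀ g ∈ S, (φ g).BlockTriangular b) (g : G) : (φ g).BlockTriangular b := by
  have hg : g ∈ Subgroup.closure S := hS ▸ Subgroup.mem_top g
  induction hg using Subgroup.closure_induction with
  | mem g hg => exact htri g hg
  | one => exact map_one φ ▸ Matrix.blockTriangular_one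
  | mul g h _ _ hg hh => exact map_mul φ g h ▸ hg.mul hh
  | inv g _ hg =>
    let : Invertible (φ g) := (Group.isUnit g |>.map φ).invertible
    have hinv : (φ g)⁻¹ = φ g⁻¹ := Matrix.inv_eq_left_inv <| by
      rw [← map_mul, inv_mul_cancel, map_one]
    exact hinv ▸ Matrix.blockTriangular_inv_of_blockTriangular hg

theorem toSquareBlockProp_map_eq_one_of_mem_commutator (hS : Subgroup.closure S = ⊤)
    (htri : ∀ g ∈ S, (φ g).BlockTriangular b) {s : Set β} (hs : s.OrdConnected)
    [DecidablePred (b · ∈ s)]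
    (hcomm : ∀ g ∈ S, ∀ h ∈ S, Commute ((φ g).toSquareBlockProp (b · ∈ s))
      ((φ h).toSquareBlockProp (b · ∈ s)))
    {γ : G} (hγ : γ ∈ commutator G) : (φ γ).toSquareBlockProp (b · ∈ s) = 1 :=
  let φ' : G →* Matrix.blockTriangularSubsemiring R b :=
    φ.codRestrict _ (blockTriangular_map_of_closure_eq_top hS htri)
  commutator_le_ker_of_commute_of_closure_eq_top hS
    ((diagonalBlockHom R b hs).toMonoidHom.comp φ') hcomm hγ

theorem map_apply_eq_one_apply_of_mem_commutator (hS : Subgroup.closure S = ⊤)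
    (htri : ∀ g ∈ S, (φ g).BlockTriangular b) {s t : Set β} (hs : IsUpperSet s) (ht : IsLowerSet t)
    [DecidablePred (b · ∈ s ∩ t)]
    (hcomm : ∀ g ∈ S, ∀ h ∈ S, Commute ((φ g).toSquareBlockProp (b · ∈ s ∩ t))
      ((φ h).toSquareBlockProp (b · ∈ s ∩ t)))
    {γ : G} (hγ : γ ∈ commutator G) {i j : m} (hi : b i ∈ s) (hj : b j ∈ t) :
    φ γ i j = (1 : Matrix m m R) i j := by
  rcases lt_or_ge (b j) (b i) with hji | hij
  · rw [blockTriangular_map_of_closure_eq_top hS htri γ hji, Matrix.blockTriangular_one hji]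
  · have hblock : (φ γ).toSquareBlockProp (b · ∈ s ∩ t) = 1 :=
      toSquareBlockProp_map_eq_one_of_mem_commutator hS htri
        (hs.ordConnected.inter ht.ordConnected) hcomm hγ
    rw [← Matrix.toBlock_one_self] at hblock
    exact congr_fun₂ hblock ⟨i, hi, ht hij hj⟩ ⟨j, hs hij hi, hj⟩

end BlockTriangular

theorem stmt_7_general {n : ℕ} {R : Type*} [CommRing R]
    {φ : FreeGroup Bool →* Matrix (Fin (n + 1)) (Fin (n + 1)) R}
    (hx : (φ (FreeGroup.of false)).BlockTriangular id)
    (hy : ∀ i j : Fin (n + 1), 0 < (i : ℕ) → (j : ℕ) < n →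
      φ (FreeGroup.of true) i j = (1 : Matrix (Fin (n + 1)) (Fin (n + 1)) R) i j)
    {γ : FreeGroup Bool} (hγ : γ ∈ commutator (FreeGroup Bool)) {i j : Fin (n + 1)}
    (hi : 0 < (i : ℕ)) (hj : (j : ℕ) < n) :
    φ γ i j = (1 : Matrix (Fin (n + 1)) (Fin (n + 1)) R) i j := by
  have hy_upper : (φ (FreeGroup.of true)).BlockTriangular id := fun i j (hji : (j : ℕ) < i) ↦ by
    rw [hy i j (by omega) (by omega), Matrix.one_apply_ne (by grind)]
  have hy_block : (φ (FreeGroup.of true)).toSquareBlockProp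
      (id · ∈ Set.Ioi 0 ∩ Set.Iio (Fin.last n)) = 1 := by
    rw [← Matrix.toBlock_one_self]
    ext i j
    exact hy i j i.2.1 j.2.2
  refine map_apply_eq_one_apply_of_mem_commutator (b := id) (FreeGroup.closure_range_of Bool)
    ?_ (isUpperSet_Ioi 0) (isLowerSet_Iio (Fin.last n)) ?_ hγ hi hj
  · simpa only [Set.forall_mem_range, Bool.forall_bool] using ⟨hx, hy_upper⟩
  · simp only [Set.forall_mem_range, Bool.forall_bool, hy_block, Commute.refl, Commute.one_left,
      Commute.one_right, and_self]

/- STATEMENT 7: for the homomorphism `φ` from the free group on two generators `x`, `y`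
(modelled as `FreeGroup Bool` with `x = of false`, `y = of true`) to the matrix ring,
with `φ x = A` and `φ y = B`, every element `γ` of the commutator subgroup has `φ γ ∈ V′`,
i.e. `φ γ` has vanishing `(i,j)` entry whenever `i > 1`, `j < n+1`, `i ≠ j` (1-based),
that is `0 < i`, `j < n`, `i ≠ j` in the 0-based `Fin (n+1)` indices used here. -/
theorem stmt_7 {n : ℕ} (hn : 3 ≤ n) {R : Type*} [CommRing R]
    (hunit : IsUnit ((Nat.factorial n : ℕ) : R))
    (A B : Matrix (Fin (n + 1)) (Fin (n + 1)) R)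
    (hA : ∀ i j : Fin (n + 1), A i j =
      if (i : ℕ) = (j : ℕ) then 1
      else if 0 < (i : ℕ) ∧ (i : ℕ) ≤ (j : ℕ) ∧ (j : ℕ) < n then
        Ring.inverse ((Nat.factorial ((j : ℕ) - (i : ℕ)) : ℕ) : R)
      else 0)
    (hB : B = 1 + Matrix.single (⟨0, by omega⟩ : Fin (n + 1)) ⟨1, by omega⟩ 1
            + Matrix.single (⟨n - 1, by omega⟩ : Fin (n + 1)) ⟨n, by omega⟩ 1)
    (φ : FreeGroup Bool →* Matrix (Fin (n + 1)) (Fin (n + 1)) R)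
    (hφx : φ (FreeGroup.of false) = A) (hφy : φ (FreeGroup.of true) = B)
    (γ : FreeGroup Bool) (hγ : γ ∈ commutator (FreeGroup Bool)) :
    ∀ i j : Fin (n + 1), 0 < (i : ℕ) → (j : ℕ) < n → i ≠ j → φ γ i j = 0 := by
  have hA_upper : A.BlockTriangular id := fun i j (hji : (j : ℕ) < i) ↦ by
    rw [hA, if_neg (by omega), if_neg (by omega)]
  have hB_middle (i j : Fin (n + 1)) (hi : 0 < (i : ℕ)) (hj : (j : ℕ) < n) :
      B i j = (1 : Matrix (Fin (n + 1)) (Fin (n + 1)) R) i j := by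
    rw [hB, Matrix.add_apply, Matrix.add_apply, Matrix.single_apply_of_ne _ _ _ _ _ (by grind),
      Matrix.single_apply_of_ne _ _ _ _ _ (by grind), add_zero, add_zero]
  intro i j hi hj hij
  rw [stmt_7_general (hφx ▸ hA_upper) (hφy ▸ hB_middle) hγ hi hj, Matrix.one_apply_ne hij]
end

section
/- Let c be a positive integer, let f be an element of the commutator subgroup of F, and let σ : F → F be the group homomorphism determined by σ(x) = x^c and σ(y) = f⁻¹ y^c f. Let τ_c : U → U be the map sending a matrix M to the matrix whose (i,j) entry is c^{j−i}·M_{i,j}. Then for every w ∈ F there exists m ∈ R such that φ(σ(w)) = τ_c(φ(w)) · (1 + m·E_{1,n+1}); that is, φ intertwines σ with τ_c modulo the subgroup Z. (This is the discrete form of the Proposition that φ : π → Ū_{n+1} is Galois-equivariant.) -/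
/-!
Agreeing off the top right corner (that is, modulo `Z`) and agreeing away from the first row and the
last column are both congruences on the group `U`. For the second one `B` is trivial, so the image
of `φ` is cyclic and `f`, being a product of commutators, maps to `1`. A matrix with trivial
interior commutes with `B` modulo `Z`; hence the conjugation by `f` in `σ y` disappears and
`φ (σ y) ≡ B ^ c`.

It remains to see that `A ^ c ≡ τ_c A` and `B ^ c ≡ τ_c B` modulo `Z`. Both hold because
`t ↦ τ_t A` and `t ↦ τ_t B` are one-parameter subgroups modulo `Z`: for `A`, whose interior is the
exponential of a nilpotent Jordan block, this is the binomial theorem. As `τ_c` is an endomorphism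
of `U`, the two homomorphisms `φ ∘ σ` and `τ_c ∘ φ` into `U / Z` agree, since they do so on `x`
and `y`.
-/

open Finset Matrix

section FreeGroupHoms

lemma commutator_le_ker_of_pairwise_commute {α G : Type*} [Group G] (q : FreeGroup α →* G)
    (h : ∀ a b, Commute (q (FreeGroup.of a)) (q (FreeGroup.of b))) :
    commutator (FreeGroup α) ≤ q.ker := by
  have hrange : q.range = Subgroup.closure (Set.range (q ∘ FreeGroup.of)) := by
    rw [MonoidHom.range_eq_map, ← FreeGroup.closure_range_of, MonoidHom.map_closure,
      ← Set.range_comp]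
  have hcomm : IsMulCommutative q.range := by
    rw [hrange]
    apply Subgroup.isMulCommutative_closure
    rintro _ ⟨a, rfl⟩ _ ⟨b, rfl⟩
    exact h a b
  rw [← Subgroup.map_eq_bot_iff, commutator_def, Subgroup.map_commutator,
    ← MonoidHom.range_eq_map, Subgroup.commutator_self_eq_bot_iff]
  exact hcomm

end FreeGroupHoms

section Triangular

variable {ι R : Type*} [Fintype ι] [LinearOrder ι] [LocallyFiniteOrder ι] [CommRing R]

lemma mul_apply_eq_sum_Icc {M N : Matrix ι ι R} (hM : M.IsUpperTriangular)
    (hN : N.IsUpperTriangular) (i j : ι) :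
    (M * N) i j = ∑ k ∈ Icc i j, M i k * N k j := by
  rw [mul_apply]
  refine (sum_subset (subset_univ _) fun k _ hk ↦ ?_).symm
  rcases lt_or_ge k i with hki | hik
  · rw [hM hki, zero_mul]
  · rw [hN (lt_of_not_ge fun hkj ↦ hk (mem_Icc.2 ⟨hik, hkj⟩)), mul_zero]

variable (ι R) in
/-- The upper triangular matrices with ones on the diagonal, as a submonoid of all matrices, so that
its elements coerce to matrices; the group structure is the instance below. -/
def unitriangular : Submonoid (Matrix ι ι R) where
  carrier := {M | M.IsUpperTriangular ∧ ∀ i, M i i = 1}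
  one_mem' := ⟨blockTriangular_one, one_apply_eq⟩
  mul_mem' := by
    rintro M N ⟨hM, hM₁⟩ ⟨hN, hN₁⟩
    refine ⟨hM.mul hN, fun i ↦ ?_⟩
    rw [mul_apply_eq_sum_Icc hM hN, Icc_self, sum_singleton, hM₁, hN₁, one_mul]

namespace unitriangular

lemma apply_of_lt (M : unitriangular ι R) {i j : ι} (h : j < i) : M.1 i j = 0 := M.2.1 h

lemma apply_self (M : unitriangular ι R) (i : ι) : M.1 i i = 1 := M.2.2 i

lemma mul_apply_eq_sum (M N : unitriangular ι R) (i j : ι) :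
    (M * N).1 i j = ∑ k ∈ Icc i j, M.1 i k * N.1 k j :=
  mul_apply_eq_sum_Icc M.2.1 N.2.1 i j

lemma isUnit_det (M : unitriangular ι R) : IsUnit M.1.det := by
  simp only [det_of_isUpperTriangular M.2.1, apply_self, prod_const_one, isUnit_one]

lemma inv_mem (M : unitriangular ι R) : (M⁻¹ : Matrix ι ι R) ∈ unitriangular ι R := by
  have : Invertible M.1 := invertibleOfIsUnitDet _ (isUnit_det M)
  have hinv : (M⁻¹ : Matrix ι ι R).IsUpperTriangular :=
    blockTriangular_inv_of_blockTriangular M.2.1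
  refine ⟨hinv, fun i ↦ ?_⟩
  have hdiag := congrFun₂ (mul_nonsing_inv M.1 (isUnit_det M)) i i
  rwa [mul_apply_eq_sum_Icc M.2.1 hinv, Icc_self, sum_singleton, apply_self, one_mul,
    one_apply_eq] at hdiag

noncomputable instance : Group (unitriangular ι R) where
  inv M := ⟨M.1⁻¹, inv_mem M⟩
  inv_mul_cancel M := Subtype.ext (nonsing_inv_mul M.1 (isUnit_det M))

/-- Two unitriangular matrices are congruent when they agree at every entry `(i, j)` with
`[i, j] ∈ D`. An entry of a product only involves entries indexed by subintervals, which is why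
`D` has to be a lower set. -/
def agreeCon (D : LowerSet (NonemptyInterval ι)) : Con (unitriangular ι R) where
  r M N := ∀ I ∈ D, M.1 I.fst I.snd = N.1 I.fst I.snd
  iseqv := ⟨fun _ _ _ ↦ rfl, fun h I hI ↦ (h I hI).symm,
    fun h h' I hI ↦ (h I hI).trans (h' I hI)⟩
  mul' {M M' N N'} hM hN I hI := by
    rw [mul_apply_eq_sum, mul_apply_eq_sum]
    refine sum_congr rfl fun k hk ↦ ?_
    obtain ⟨hik, hkj⟩ := mem_Icc.1 hk
    have hleft : (⟨(I.fst, k), hik⟩ : NonemptyInterval ι) ≤ I := ⟨le_rfl, hkj⟩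
    have hright : (⟨(k, I.snd), hkj⟩ : NonemptyInterval ι) ≤ I := ⟨hik, le_rfl⟩
    exact congrArg₂ (· * ·) (hM _ (D.lower hleft hI)) (hN _ (D.lower hright hI))

lemma apply_eq_of_agreeCon {D : LowerSet (NonemptyInterval ι)} {M N : unitriangular ι R}
    (h : agreeCon D M N) {i j : ι} (hD : ∀ hij : i ≤ j, (⟨(i, j), hij⟩ : NonemptyInterval ι) ∈ D) :
    M.1 i j = N.1 i j := by
  rcases le_or_gt i j with hij | hji
  · exact h _ (hD hij)
  · rw [apply_of_lt M hji, apply_of_lt N hji]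

section BoundedOrder

variable [BoundedOrder ι]

variable (ι R) in
/-- The congruence modulo the subgroup `Z` of matrices `1 + m E_{⊥,⊤}`: multiplying by
such a matrix changes only the entry at `(⊥, ⊤)`. -/
def cornerCon : Con (unitriangular ι R) :=
  agreeCon (LowerSet.Iio ⊤)

variable (ι R) in
/-- The congruence of agreeing away from the first row and the last column, modulo which `B` is
trivial. -/
def interiorCon : Con (unitriangular ι R) :=
  agreeCon ⟨{I | ⊥ < I.fst ∧ I.snd < ⊤}, fun _ _ hJI hI ↦
    ⟨hI.1.trans_le hJI.1, hJI.2.trans_lt hI.2⟩⟩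

lemma cornerCon_iff {M N : unitriangular ι R} :
    cornerCon ι R M N ↔ ∀ i j, (i = ⊥ → j ≠ ⊤) → M.1 i j = N.1 i j := by
  refine ⟨fun h i j hij ↦ apply_eq_of_agreeCon h fun _ ↦ ?_, fun h I hI ↦ h _ _ fun hi hj ↦ ?_⟩
  · rw [LowerSet.mem_Iio_iff, lt_top_iff_ne_top]
    intro htop
    have hends : (i, j) = (⊥, ⊤) := congrArg NonemptyInterval.toProd htop
    exact hij (congrArg Prod.fst hends) (congrArg Prod.snd hends)
  · exact (lt_top_iff_ne_top.1 hI) (NonemptyInterval.ext (Prod.ext hi hj))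

lemma apply_eq_one_of_interiorCon {M : unitriangular ι R} (h : interiorCon ι R M 1) {i j : ι}
    (hi : i ≠ ⊥) (hj : j ≠ ⊤) : M.1 i j = (1 : Matrix ι ι R) i j :=
  apply_eq_of_agreeCon h fun _ ↦ ⟨bot_lt_iff_ne_bot.2 hi, lt_top_iff_ne_top.2 hj⟩

lemma mul_single_bot (M : unitriangular ι R) (j : ι) (m : R) :
    M.1 * single ⊥ j m = single ⊥ j m := by
  ext k l
  by_cases hl : l = j
  · subst hl
    rw [mul_single_apply_same]
    rcases eq_bot_or_bot_lt k with rfl | hk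
    · rw [apply_self, one_mul, single_apply_same]
    · rw [apply_of_lt M hk, zero_mul, single_apply_of_row_ne hk.ne]
  · rw [mul_single_apply_of_ne _ _ _ _ _ hl, single_apply_of_col_ne _ _ (Ne.symm hl)]

lemma single_top_mul (M : unitriangular ι R) (i : ι) (m : R) :
    single i ⊤ m * M.1 = single i ⊤ m := by
  ext k l
  by_cases hk : k = i
  · subst hk
    rw [single_mul_apply_same]
    rcases eq_top_or_lt_top l with rfl | hl
    · rw [apply_self, mul_one, single_apply_same]
    · rw [apply_of_lt M hl, mul_zero, single_apply_of_col_ne _ _ hl.ne']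
  · rw [single_mul_apply_of_ne _ _ _ _ _ hk, single_apply_of_row_ne (Ne.symm hk)]

lemma exists_eq_mul_of_cornerCon {M N : unitriangular ι R} (h : cornerCon ι R M N) :
    ∃ m : R, M.1 = N.1 * (1 + single ⊥ ⊤ m) := by
  refine ⟨M.1 ⊥ ⊤ - N.1 ⊥ ⊤, ?_⟩
  rw [mul_add, mul_one, mul_single_bot]
  ext i j
  rw [Matrix.add_apply]
  by_cases hij : i = ⊥ ∧ j = ⊤
  · obtain ⟨rfl, rfl⟩ := hij
    rw [single_apply_same, add_sub_cancel]
  · rw [single_apply_of_ne _ _ _ _ _ (by tauto), add_zero]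
    exact cornerCon_iff.1 h i j (by tauto)

/-- The matrix `1 + t (E_{⊥,a} + E_{b,⊤})`. The generator `B` is the case `t = 1` with `a` the
second and `b` the last but one index. -/
def border {a b : ι} (ha : ⊥ < a) (hb : b < ⊤) (t : R) : unitriangular ι R :=
  ⟨1 + single ⊥ a t + single b ⊤ t,
    (blockTriangular_one.add (blockTriangular_single ha.le t)).add
      (blockTriangular_single hb.le t),
    fun i ↦ by
      rw [Matrix.add_apply, Matrix.add_apply, one_apply_eq,
        single_apply_of_ne _ _ _ _ _ fun h ↦ ha.ne (h.1.trans h.2.symm),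
        single_apply_of_ne _ _ _ _ _ fun h ↦ hb.ne (h.1.trans h.2.symm), add_zero, add_zero]⟩

section border

variable {a b : ι} (ha : ⊥ < a) (hb : b < ⊤)

lemma border_interiorCon_one (t : R) : interiorCon ι R (border ha hb t) 1 := by
  rintro I ⟨hi, hj⟩
  simp only [border, Matrix.add_apply, single_apply_of_row_ne hi.ne,
    single_apply_of_col_ne _ _ hj.ne', add_zero, Submonoid.coe_one]

lemma mul_border_apply {M : unitriangular ι R} (hM : interiorCon ι R M 1) (t : R) {i j : ι}
    (hij : i = ⊥ → j ≠ ⊤) :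
    (M * border ha hb t).1 i j = M.1 i j + single ⊥ a t i j + single b ⊤ t i j := by
  have hcol : (M.1 * single b ⊤ t) i j = single b ⊤ t i j := by
    by_cases hj : j = ⊤
    · subst hj
      rw [mul_single_apply_same, apply_eq_one_of_interiorCon hM (fun hi ↦ hij hi rfl) hb.ne]
      by_cases hib : i = b
      · rw [hib, one_apply_eq, one_mul, single_apply_same]
      · rw [one_apply_ne hib, zero_mul, single_apply_of_row_ne (Ne.symm hib)]
    · rw [mul_single_apply_of_ne _ _ _ _ _ hj, single_apply_of_col_ne _ _ (Ne.symm hj)]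
  rw [Submonoid.coe_mul, border, mul_add, mul_add, mul_one, mul_single_bot, Matrix.add_apply,
    Matrix.add_apply, hcol]

lemma border_mul_apply {M : unitriangular ι R} (hM : interiorCon ι R M 1) (t : R) {i j : ι}
    (hij : i = ⊥ → j ≠ ⊤) :
    (border ha hb t * M).1 i j = M.1 i j + single ⊥ a t i j + single b ⊤ t i j := by
  have hrow : (single ⊥ a t * M.1) i j = single ⊥ a t i j := by
    by_cases hi : i = ⊥
    · subst hi
      rw [single_mul_apply_same, apply_eq_one_of_interiorCon hM ha.ne' (hij rfl)]
      by_cases haj : a = j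
      · rw [haj, one_apply_eq, mul_one, single_apply_same]
      · rw [one_apply_ne haj, mul_zero, single_apply_of_col_ne _ _ haj]
    · rw [single_mul_apply_of_ne _ _ _ _ _ hi, single_apply_of_row_ne (Ne.symm hi)]
  rw [Submonoid.coe_mul, border, add_mul, add_mul, one_mul, single_top_mul, Matrix.add_apply,
    Matrix.add_apply, hrow]

lemma border_mul_cornerCon_mul_border {M : unitriangular ι R} (hM : interiorCon ι R M 1) (t : R) :
    cornerCon ι R (border ha hb t * M) (M * border ha hb t) :=
  cornerCon_iff.2 fun _ _ hij ↦ by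
    rw [border_mul_apply ha hb hM t hij, mul_border_apply ha hb hM t hij]

lemma border_mul_border_cornerCon (s t : R) :
    cornerCon ι R (border ha hb s * border ha hb t) (border ha hb (s + t)) :=
  cornerCon_iff.2 fun i j hij ↦ by
    rw [mul_border_apply ha hb (border_interiorCon_one ha hb s) t hij]
    simp only [border, single_add, Matrix.add_apply]
    abel

end border

end BoundedOrder

end unitriangular

end Triangular

section Scaling

namespace unitriangular

variable {n : ℕ} {R : Type*} [CommRing R]

lemma pow_mul_apply_mem (t : R) (M : unitriangular (Fin n) R) :
    (of fun i j ↦ t ^ (j.val - i.val) * M.1 i j) ∈ unitriangular (Fin n) R :=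
  ⟨fun i j (hji : j < i) ↦ by rw [of_apply, apply_of_lt M hji, mul_zero],
    fun i ↦ by rw [of_apply, apply_self, tsub_self, pow_zero, one_mul]⟩

/-- The endomorphism `τ_t` multiplying the `d`-th superdiagonal by `t ^ d`. The truncated
exponents below the diagonal are harmless, the entries there being zero. -/
def scale (t : R) : unitriangular (Fin n) R →* unitriangular (Fin n) R where
  toFun M := ⟨of fun i j ↦ t ^ (j.val - i.val) * M.1 i j, pow_mul_apply_mem t M⟩
  map_one' := by
    ext i j
    rcases eq_or_ne i j with rfl | hij
    · simp
    · simp [one_apply_ne hij]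
  map_mul' M N := by
    ext i j
    rw [mul_apply_eq_sum]
    change t ^ (j.val - i.val) * (M * N).1 i j =
      ∑ k ∈ Icc i j, t ^ (k.val - i.val) * M.1 i k * (t ^ (j.val - k.val) * N.1 k j)
    rw [mul_apply_eq_sum, mul_sum]
    refine sum_congr rfl fun k hk ↦ ?_
    obtain ⟨hik, hkj⟩ := mem_Icc.1 hk
    rw [← tsub_add_tsub_cancel (Fin.val_le_of_le hkj) (Fin.val_le_of_le hik), pow_add]
    ring

lemma scale_apply (t : R) (M : unitriangular (Fin n) R) (i j : Fin n) :
    (scale t M).1 i j = t ^ (j.val - i.val) * M.1 i j := rfl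

lemma scale_one (M : unitriangular (Fin n) R) : scale 1 M = M := by
  ext i j
  rw [scale_apply, one_pow, one_mul]

lemma map_zpow_eq_map_scale {G : Type*} [Group G] (q : unitriangular (Fin n) R →* G)
    {M : unitriangular (Fin n) R}
    (hM : ∀ s t : R, q (scale (s + t) M) = q (scale s M) * q (scale t M)) (c : ℤ) :
    q M ^ c = q (scale (c : R) M) := by
  let oneParam : Multiplicative R →* G := .mk' (fun t ↦ q (scale t.toAdd M)) fun s t ↦ hM _ _
  have hpow := map_zpow oneParam (.ofAdd 1) c
  rw [← ofAdd_zsmul, zsmul_one] at hpow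
  have hone : oneParam (.ofAdd 1) = q M := congrArg q (scale_one M)
  rw [← hone]
  exact hpow.symm

lemma pow_mul_single_apply (s t : R) (k l i j : Fin n) :
    s ^ (j.val - i.val) * single k l t i j = single k l (s ^ (l.val - k.val) * t) i j := by
  by_cases hkl : k = i ∧ l = j
  · obtain ⟨rfl, rfl⟩ := hkl
    rw [single_apply_same, single_apply_same]
  · rw [single_apply_of_ne _ _ _ _ _ hkl, single_apply_of_ne _ _ _ _ _ hkl, mul_zero]

lemma scale_border {a b : Fin (n + 1)} (ha : ⊥ < a) (hb : b < ⊤) (ha₁ : a.val = 1)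
    (hb₁ : b.val + 1 = n) (s t : R) : scale s (border ha hb t) = border ha hb (s * t) := by
  ext i j
  have hone : s ^ (j.val - i.val) * (1 : Matrix (Fin (n + 1)) (Fin (n + 1)) R) i j =
      (1 : Matrix _ _ R) i j :=
    congrFun₂ (congrArg Subtype.val (map_one (scale s))) i j
  have hrow : a.val - (⊥ : Fin (n + 1)).val = 1 := ha₁
  have hcol : (⊤ : Fin (n + 1)).val - b.val = 1 := by
    rw [Fin.top_eq_last, Fin.val_last]
    omega
  simp only [scale_apply, border, Matrix.add_apply, mul_add, hone, pow_mul_single_apply, hrow,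
    hcol, pow_one]

end unitriangular

end Scaling

section Exponential

variable {R : Type*} [CommRing R]

lemma isUnit_factorial_of_le {m n : ℕ} (h : m ≤ n) (hn : IsUnit (n.factorial : R)) :
    IsUnit (m.factorial : R) :=
  isUnit_of_dvd_unit (Nat.cast_dvd_cast (Nat.factorial_dvd_factorial h)) hn

lemma inverse_factorial_mul_inverse_factorial {a b : ℕ} (h : IsUnit ((a + b).factorial : R)) :
    Ring.inverse (a.factorial : R) * Ring.inverse (b.factorial : R) =
      (a + b).choose a * Ring.inverse ((a + b).factorial : R) := by
  have ha := isUnit_factorial_of_le (Nat.le_add_right a b) h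
  have hb := isUnit_factorial_of_le (Nat.le_add_left b a) h
  have hchoose : ((a + b).choose a * a.factorial * b.factorial : R) = (a + b).factorial :=
    mod_cast congrArg (Nat.cast (R := R))
      (Nat.choose_symm_add ▸ Nat.add_choose_mul_factorial_mul_factorial a b)
  rw [Ring.eq_mul_inverse_iff_mul_eq _ _ _ h, ← hchoose]
  calc _ = (a + b).choose a * (Ring.inverse (a.factorial : R) * a.factorial) *
        (Ring.inverse (b.factorial : R) * b.factorial) := by ring
    _ = _ := by rw [Ring.inverse_mul_cancel _ ha, Ring.inverse_mul_cancel _ hb, mul_one, mul_one]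

lemma sum_antidiagonal_pow_mul_inverse_factorial {d : ℕ} (h : IsUnit (d.factorial : R)) (s t : R) :
    ∑ p ∈ antidiagonal d, s ^ p.1 * Ring.inverse (p.1.factorial : R) *
      (t ^ p.2 * Ring.inverse (p.2.factorial : R)) =
      (s + t) ^ d * Ring.inverse (d.factorial : R) := by
  rw [(Commute.all s t).add_pow', sum_mul]
  refine sum_congr rfl fun p hp ↦ ?_
  obtain rfl := HasAntidiagonal.mem_antidiagonal.1 hp
  rw [mul_mul_mul_comm, inverse_factorial_mul_inverse_factorial h, nsmul_eq_mul]
  ring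

lemma sum_Icc_fin_eq_sum_antidiagonal {M : Type*} [AddCommMonoid M] {n : ℕ} {i j : Fin n}
    (hij : i ≤ j) (g : ℕ → ℕ → M) :
    ∑ k ∈ Icc i j, g (k.val - i.val) (j.val - k.val) =
      ∑ p ∈ antidiagonal (j.val - i.val), g p.1 p.2 := by
  refine sum_bij (fun k _ ↦ (k.val - i.val, j.val - k.val)) ?_ ?_ ?_ fun _ _ ↦ rfl
  · intro k hk
    simp only [mem_Icc, Fin.le_def] at hk
    simp only [HasAntidiagonal.mem_antidiagonal]
    omega
  · intro k hk l hl hkl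
    simp only [mem_Icc, Fin.le_def, Prod.mk.injEq] at hk hl hkl
    omega
  · rintro ⟨a, b⟩ hab
    rw [HasAntidiagonal.mem_antidiagonal] at hab
    rw [Fin.le_def] at hij
    refine ⟨⟨i.val + a, by omega⟩, ?_, ?_⟩
    · simp only [mem_Icc, Fin.le_def]
      omega
    · simp only [Prod.mk.injEq]
      omega

end Exponential

section InteriorExponential

namespace unitriangular

variable {n : ℕ} {R : Type*} [CommRing R]

/-- The matrix `A`: the exponential of the nilpotent Jordan block on the indices `0 < i < n`,
bordered by a trivial first row and a trivial last column. -/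
noncomputable def interiorExp (n : ℕ) (R : Type*) [CommRing R] : unitriangular (Fin (n + 1)) R :=
  ⟨of fun i j ↦ if i.val = j.val then 1
      else if 0 < i.val ∧ i.val ≤ j.val ∧ j.val < n then
        Ring.inverse ((j.val - i.val).factorial : R)
      else 0,
    fun i j (hji : j < i) ↦ by
      rw [of_apply, if_neg (Fin.val_ne_of_ne hji.ne'), if_neg fun h ↦ hji.not_ge h.2.1],
    fun i ↦ by rw [of_apply, if_pos rfl]⟩

lemma interiorExp_apply (i j : Fin (n + 1)) :
    (interiorExp n R).1 i j = if i.val = j.val then 1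
      else if 0 < i.val ∧ i.val ≤ j.val ∧ j.val < n then
        Ring.inverse ((j.val - i.val).factorial : R)
      else 0 := rfl

lemma interiorExp_apply_of_interior {i j : Fin (n + 1)} (hi : 0 < i.val) (hij : i ≤ j)
    (hj : j.val < n) :
    (interiorExp n R).1 i j = Ring.inverse ((j.val - i.val).factorial : R) := by
  rcases hij.eq_or_lt with rfl | hlt
  · rw [apply_self, tsub_self, Nat.factorial_zero, Nat.cast_one, Ring.inverse_one]
  · rw [interiorExp_apply, if_neg (Fin.val_ne_of_ne hlt.ne), if_pos ⟨hi, hij, hj⟩]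

lemma scale_interiorExp_apply_of_boundary (t : R) {i j : Fin (n + 1)}
    (h : ¬(0 < i.val ∧ j.val < n)) :
    (scale t (interiorExp n R)).1 i j = (1 : Matrix _ _ R) i j := by
  rcases eq_or_ne i j with rfl | hij
  · rw [apply_self, one_apply_eq]
  · rw [scale_apply, one_apply_ne hij, interiorExp_apply, if_neg (Fin.val_ne_of_ne hij),
      if_neg fun h' ↦ h ⟨h'.1, h'.2.2⟩, mul_zero]

lemma scale_mul_scale_interiorExp_apply (h : IsUnit ((n - 2).factorial : R)) (s t : R)
    {i j : Fin (n + 1)} (hi : 0 < i.val) (hij : i ≤ j) (hj : j.val < n) :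
    (scale s (interiorExp n R) * scale t (interiorExp n R)).1 i j =
      (s + t) ^ (j.val - i.val) * Ring.inverse ((j.val - i.val).factorial : R) := by
  have hterm : ∀ k ∈ Icc i j,
      (scale s (interiorExp n R)).1 i k * (scale t (interiorExp n R)).1 k j =
        s ^ (k.val - i.val) * Ring.inverse ((k.val - i.val).factorial : R) *
          (t ^ (j.val - k.val) * Ring.inverse ((j.val - k.val).factorial : R)) := fun k hk ↦ by
    obtain ⟨hik, hkj⟩ := mem_Icc.1 hk
    rw [scale_apply, scale_apply,
      interiorExp_apply_of_interior hi hik ((Fin.val_le_of_le hkj).trans_lt hj),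
      interiorExp_apply_of_interior (hi.trans_le hik) hkj hj]
  rw [mul_apply_eq_sum, sum_congr rfl hterm, sum_Icc_fin_eq_sum_antidiagonal hij fun a b ↦
      s ^ a * Ring.inverse (a.factorial : R) * (t ^ b * Ring.inverse (b.factorial : R)),
    sum_antidiagonal_pow_mul_inverse_factorial (isUnit_factorial_of_le (by omega) h)]

lemma scale_add_interiorExp (h : IsUnit ((n - 2).factorial : R)) (s t : R) :
    scale (s + t) (interiorExp n R) = scale s (interiorExp n R) * scale t (interiorExp n R) := by
  ext i j
  by_cases hint : 0 < i.val ∧ j.val < n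
  · rcases lt_or_ge j i with hji | hij
    · rw [apply_of_lt _ hji, apply_of_lt _ hji]
    · rw [scale_mul_scale_interiorExp_apply h s t hint.1 hij hint.2, scale_apply,
        interiorExp_apply_of_interior hint.1 hij hint.2]
  · rw [scale_interiorExp_apply_of_boundary _ hint, Submonoid.coe_mul, mul_apply]
    by_cases hi : 0 < i.val
    · have hcol (k : Fin (n + 1)) : (scale t (interiorExp n R)).1 k j = (1 : Matrix _ _ R) k j :=
        scale_interiorExp_apply_of_boundary t fun hk ↦ hint ⟨hi, hk.2⟩
      simp only [hcol]
      rw [← mul_apply, mul_one, scale_interiorExp_apply_of_boundary s hint]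
    · have hrow (k : Fin (n + 1)) : (scale s (interiorExp n R)).1 i k = (1 : Matrix _ _ R) i k :=
        scale_interiorExp_apply_of_boundary s fun hk ↦ hi hk.1
      simp only [hrow]
      rw [← mul_apply, one_mul, scale_interiorExp_apply_of_boundary t hint]

end unitriangular

end InteriorExponential

section Equivariance

variable {n : ℕ} {R : Type*} [CommRing R]

open unitriangular

lemma map_comp_eq_map_scale_comp {G : Type*} [Group G] (q : unitriangular (Fin n) R →* G)
    {φ : FreeGroup Bool →* unitriangular (Fin n) R} {σ : FreeGroup Bool →* FreeGroup Bool}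
    {f : FreeGroup Bool} {c : ℤ}
    (hx : ∀ s t : R, q (scale (s + t) (φ (.of false))) =
      q (scale s (φ (.of false))) * q (scale t (φ (.of false))))
    (hy : ∀ s t : R, q (scale (s + t) (φ (.of true))) =
      q (scale s (φ (.of true))) * q (scale t (φ (.of true))))
    (hyf : Commute (q (φ (.of true))) (q (φ f)))
    (hσx : σ (.of false) = .of false ^ c) (hσy : σ (.of true) = f⁻¹ * .of true ^ c * f) :
    q.comp (φ.comp σ) = q.comp ((scale (c : R)).comp φ) := by
  refine FreeGroup.ext_hom _ _ fun b ↦ ?_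
  cases b
  · rw [MonoidHom.comp_apply, MonoidHom.comp_apply, hσx, map_zpow, map_zpow,
      map_zpow_eq_map_scale q hx]
    rfl
  · rw [MonoidHom.comp_apply, MonoidHom.comp_apply, hσy]
    simp only [map_mul, map_inv, map_zpow]
    rw [mul_assoc, (hyf.zpow_left c).eq, inv_mul_cancel_left, map_zpow_eq_map_scale q hy]
    rfl

lemma interiorCon_one_of_mem_commutator {ι : Type*} [Fintype ι] [LinearOrder ι]
    [LocallyFiniteOrder ι] [BoundedOrder ι] {φ : FreeGroup Bool →* unitriangular ι R}
    (hy : interiorCon ι R (φ (.of true)) 1) {f : FreeGroup Bool}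
    (hf : f ∈ commutator (FreeGroup Bool)) : interiorCon ι R (φ f) 1 := by
  let q := (interiorCon ι R).mk'.comp φ
  have hqy : q (.of true) = 1 := (Con.eq _).2 hy
  refine (Con.eq _).1 (commutator_le_ker_of_pairwise_commute q ?_ hf)
  rintro (_ | _) (_ | _) <;> simp only [hqy, Commute.refl, Commute.one_left, Commute.one_right]

lemma cornerCon_map_scale_of_border {a b : Fin (n + 1)} {ha : ⊥ < a} {hb : b < ⊤}
    (ha₁ : a.val = 1) (hb₁ : b.val + 1 = n) (hunit : IsUnit ((n - 2).factorial : R))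
    {φ : FreeGroup Bool →* unitriangular (Fin (n + 1)) R} (hφx : φ (.of false) = interiorExp n R)
    (hφy : φ (.of true) = border ha hb 1) {c : ℤ} {f : FreeGroup Bool}
    (hf : f ∈ commutator (FreeGroup Bool)) {σ : FreeGroup Bool →* FreeGroup Bool}
    (hσx : σ (.of false) = .of false ^ c) (hσy : σ (.of true) = f⁻¹ * .of true ^ c * f)
    (w : FreeGroup Bool) :
    cornerCon (Fin (n + 1)) R (φ (σ w)) (scale (c : R) (φ w)) := by
  have hφf : interiorCon (Fin (n + 1)) R (φ f) 1 :=
    interiorCon_one_of_mem_commutator (hφy ▸ border_interiorCon_one ha hb 1) hf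
  let q := (cornerCon (Fin (n + 1)) R).mk'
  have hx (s t : R) : q (scale (s + t) (φ (.of false))) =
      q (scale s (φ (.of false))) * q (scale t (φ (.of false))) := by
    rw [hφx, scale_add_interiorExp hunit, map_mul]
  have hy (s t : R) : q (scale (s + t) (φ (.of true))) =
      q (scale s (φ (.of true))) * q (scale t (φ (.of true))) := by
    simp only [hφy, scale_border ha hb ha₁ hb₁, mul_one]
    exact (Con.eq _).2 ((cornerCon _ R).symm (border_mul_border_cornerCon ha hb s t))
  have hyf : Commute (q (φ (.of true))) (q (φ f)) := by
    rw [hφy]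
    exact (Con.eq _).2 (border_mul_cornerCon_mul_border ha hb hφf 1)
  exact (Con.eq _).1 (DFunLike.congr_fun (map_comp_eq_map_scale_comp q hx hy hyf hσx hσy) w)

theorem stmt_8_general {n : ℕ} (hn : 0 < n) {R : Type*} [CommRing R]
    (hunit : IsUnit ((Nat.factorial (n - 2) : ℕ) : R))
    (A B : Matrix (Fin (n + 1)) (Fin (n + 1)) R)
    (hA : ∀ i j : Fin (n + 1), A i j =
      if (i : ℕ) = (j : ℕ) then 1
      else if 0 < (i : ℕ) ∧ (i : ℕ) ≤ (j : ℕ) ∧ (j : ℕ) < n then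
        Ring.inverse ((Nat.factorial ((j : ℕ) - (i : ℕ)) : ℕ) : R)
      else 0)
    (hB : B = 1 + Matrix.single 0 ⟨1, Nat.succ_lt_succ hn⟩ 1
            + Matrix.single ⟨n - 1, (n.sub_le 1).trans_lt n.lt_succ_self⟩ (Fin.last n) 1)
    (φ : FreeGroup Bool →* Matrix (Fin (n + 1)) (Fin (n + 1)) R)
    (hφx : φ (FreeGroup.of false) = A) (hφy : φ (FreeGroup.of true) = B)
    (c : ℤ)
    (f : FreeGroup Bool) (hf : f ∈ commutator (FreeGroup Bool))
    (σ : FreeGroup Bool →* FreeGroup Bool)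
    (hσx : σ (FreeGroup.of false) = (FreeGroup.of false) ^ c)
    (hσy : σ (FreeGroup.of true) = f⁻¹ * (FreeGroup.of true) ^ c * f)
    (w : FreeGroup Bool) :
    ∃ m : R, φ (σ w) =
      (Matrix.of fun i j : Fin (n + 1) => (c : R) ^ ((j : ℕ) - (i : ℕ)) * φ w i j) *
        (1 + Matrix.single 0 (Fin.last n) m) := by
  have ha : (⊥ : Fin (n + 1)) < ⟨1, Nat.succ_lt_succ hn⟩ := Nat.zero_lt_one
  have hb : (⟨n - 1, (n.sub_le 1).trans_lt n.lt_succ_self⟩ : Fin (n + 1)) < ⊤ :=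
    Nat.sub_one_lt hn.ne'
  let Φ : FreeGroup Bool →* unitriangular (Fin (n + 1)) R :=
    FreeGroup.lift fun b ↦ bif b then border ha hb 1 else interiorExp n R
  have hΦx : Φ (.of false) = interiorExp n R := FreeGroup.lift_apply_of
  have hΦy : Φ (.of true) = border ha hb 1 := FreeGroup.lift_apply_of
  have hφ : φ = (unitriangular (Fin (n + 1)) R).subtype.comp Φ := by
    refine FreeGroup.ext_hom _ _ (Bool.rec ?_ ?_)
    · rw [MonoidHom.comp_apply, hΦx, hφx]
      exact Matrix.ext hA
    · rw [MonoidHom.comp_apply, hΦy, hφy, hB]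
      rfl
  rw [hφ]
  exact exists_eq_mul_of_cornerCon <|
    cornerCon_map_scale_of_border rfl (Nat.sub_add_cancel hn) hunit hΦx hΦy hf hσx hσy w

end Equivariance

/- STATEMENT 8: with `φ : F → U` as before (`F = FreeGroup Bool`, `x = of false`,
`y = of true`, `φ x = A`, `φ y = B`), let `c` be a positive integer, `f` an element of
the commutator subgroup of `F`, and `σ : F → F` the homomorphism with `σ x = x^c`,
`σ y = f⁻¹ y^c f`.  Let `τ_c` send a matrix `M` to the matrix with `(i,j)` entry
`c^(j−i)·M_{i,j}`.  Then for every `w ∈ F` there is `m ∈ R` with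
`φ (σ w) = τ_c (φ w) * (1 + m·E_{1,n+1})` (the elementary matrix is `E_{0,n}` in the
0-based indices used here): `φ` intertwines `σ` with `τ_c` modulo `Z`. -/
theorem stmt_8 {n : ℕ} (hn : 3 ≤ n) {R : Type*} [CommRing R]
    (hunit : IsUnit ((Nat.factorial n : ℕ) : R))
    (A B : Matrix (Fin (n + 1)) (Fin (n + 1)) R)
    (hA : ∀ i j : Fin (n + 1), A i j =
      if (i : ℕ) = (j : ℕ) then 1
      else if 0 < (i : ℕ) ∧ (i : ℕ) ≤ (j : ℕ) ∧ (j : ℕ) < n then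
        Ring.inverse ((Nat.factorial ((j : ℕ) - (i : ℕ)) : ℕ) : R)
      else 0)
    (hB : B = 1 + Matrix.single (⟨0, by omega⟩ : Fin (n + 1)) ⟨1, by omega⟩ 1
            + Matrix.single (⟨n - 1, by omega⟩ : Fin (n + 1)) ⟨n, by omega⟩ 1)
    (φ : FreeGroup Bool →* Matrix (Fin (n + 1)) (Fin (n + 1)) R)
    (hφx : φ (FreeGroup.of false) = A) (hφy : φ (FreeGroup.of true) = B)
    (c : ℕ) (hc : 0 < c)
    (f : FreeGroup Bool) (hf : f ∈ commutator (FreeGroup Bool))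
    (σ : FreeGroup Bool →* FreeGroup Bool)
    (hσx : σ (FreeGroup.of false) = (FreeGroup.of false) ^ c)
    (hσy : σ (FreeGroup.of true) = f⁻¹ * (FreeGroup.of true) ^ c * f)
    (w : FreeGroup Bool) :
    ∃ m : R, φ (σ w) =
      (Matrix.of fun i j : Fin (n + 1) => (c : R) ^ ((j : ℕ) - (i : ℕ)) * φ w i j) *
        (1 + Matrix.single (⟨0, by omega⟩ : Fin (n + 1)) ⟨n, by omega⟩ m) := by
  have hunit' := isUnit_factorial_of_le (Nat.sub_le n 2) hunit
  simp only [← Int.cast_natCast (R := R) c]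
  exact stmt_8_general (by omega) hunit' A B hA hB φ hφx hφy c f hf σ (by rwa [zpow_natCast])
    (by rwa [zpow_natCast]) w
end

section
/- For all M, N ∈ U and all indices 1 ≤ i < j ≤ n+1, the (i,j) entry of the product satisfies (M·N)_{i,j} = M_{i,j} + N_{i,j} + Σ_{r=i+1}^{j−1} M_{i,r}·N_{r,j}. Equivalently, the 1-cochains a_{i,j} : U → R, a_{i,j}(M) = M_{i,j}, on the group U with trivial coefficients satisfy D(a_{i,j}) = − Σ_{r=i+1}^{j−1} a_{i,r} ∪ a_{r,j}, where D(f)(g,h) = f(h) − f(g·h) + f(g) and (f ∪ f′)(g,h) = f(g)·f′(h); hence the cochains −a_{i,j} for i < j, (i,j) ≠ (1,n+1), form a defining system for the order-n Massey product ⟨−a_{1,2}, −a_{2,3}, …, −a_{n,n+1}⟩. -/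
section UpperTriangular

open Finset

variable {ι R : Type*} [Fintype ι] [LinearOrder ι] [LocallyFiniteOrder ι]

theorem mul_apply_eq_sum_Icc_of_isUpperTriangular [NonUnitalNonAssocSemiring R]
    {M N : Matrix ι ι R} (hM : M.IsUpperTriangular) (hN : N.IsUpperTriangular) (i j : ι) :
    (M * N) i j = ∑ r ∈ Icc i j, M i r * N r j := by
  have summand_eq_zero (r : ι) (hr : r ∉ Icc i j) : M i r * N r j = 0 := by
    rw [mem_Icc, not_and_or, not_le, not_le] at hr
    rcases hr with hri | hjr
    · rw [hM hri, zero_mul]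
    · rw [hN hjr, mul_zero]
  rw [Matrix.mul_apply]
  exact (sum_subset (subset_univ _) fun r _ ↦ summand_eq_zero r).symm

theorem mul_apply_of_isUpperTriangular_of_lt [NonUnitalNonAssocSemiring R]
    {M N : Matrix ι ι R} (hM : M.IsUpperTriangular) (hN : N.IsUpperTriangular)
    {i j : ι} (hij : i < j) :
    (M * N) i j = M i j * N j j + M i i * N i j + ∑ r ∈ Ioo i j, M i r * N r j := by
  rw [mul_apply_eq_sum_Icc_of_isUpperTriangular hM hN, ← add_sum_Ico_eq_sum_Icc hij.le,
    ← add_sum_Ioo_eq_sum_Ico hij, add_assoc]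

theorem stmt_11_general [NonAssocRing R] {M N : Matrix ι ι R}
    (hM : M.IsUpperTriangular) (hM_diag : ∀ i, M i i = 1)
    (hN : N.IsUpperTriangular) (hN_diag : ∀ i, N i i = 1) {i j : ι} (hij : i < j) :
    ((M * N) i j = M i j + N i j + ∑ r ∈ Ioo i j, M i r * N r j) ∧
      (N i j - (M * N) i j + M i j = - ∑ r ∈ Ioo i j, M i r * N r j) := by
  have entry_mul : (M * N) i j = M i j + N i j + ∑ r ∈ Ioo i j, M i r * N r j := by
    rw [mul_apply_of_isUpperTriangular_of_lt hM hN hij, hM_diag, hN_diag, mul_one, one_mul]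
  refine ⟨entry_mul, ?_⟩
  rw [entry_mul]
  abel

end UpperTriangular

theorem MemU.isUpperTriangular {n : ℕ} {R : Type*} [CommRing R]
    {M : Matrix (Fin (n + 1)) (Fin (n + 1)) R} (hM : MemU M) : M.IsUpperTriangular :=
  fun i j hji ↦ hM.1 i j hji

/- STATEMENT 11: for `M, N ∈ U` and `i < j`, the `(i,j)` entry of the product is
`(M·N)_{i,j} = M_{i,j} + N_{i,j} + ∑_{i < r < j} M_{i,r}·N_{r,j}`.  Equivalently, the
cochains `a_{i,j}(M) = M_{i,j}` satisfy the coboundary identity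
`D(a_{i,j})(M,N) = a_{i,j}(N) − a_{i,j}(M·N) + a_{i,j}(M) = − ∑_{i<r<j} a_{i,r}(M)·a_{r,j}(N)`,
so the `−a_{i,j}`, `i < j`, `(i,j) ≠ (1,n+1)`, form a defining system for the order-`n`
Massey product `⟨−a_{1,2}, …, −a_{n,n+1}⟩`. -/
theorem stmt_11 {n : ℕ} (hn : 3 ≤ n) {R : Type*} [CommRing R]
    (M N : Matrix (Fin (n + 1)) (Fin (n + 1)) R) (hM : MemU M) (hN : MemU N) :
    ∀ i j : Fin (n + 1), i < j →
      ((M * N) i j = M i j + N i j + ∑ r ∈ Finset.Ioo i j, M i r * N r j) ∧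
      (N i j - (M * N) i j + M i j = - ∑ r ∈ Finset.Ioo i j, M i r * N r j) :=
  fun _ _ ↦ stmt_11_general hM.isUpperTriangular hM.2 hN.isUpperTriangular hN.2
end

section
/- Let G be a group generated by two elements x and y. Then the commutator subgroup of G equals the normal closure in G of the single element ⁅x,y⁆ = x y x⁻¹ y⁻¹. -/
open scoped commutatorElement

theorem commutator_le_ker_iff {G G' : Type*} [Group G] [Group G'] (f : G →* G')
    (H K : Subgroup G) : ⁅H, K⁆ ≤ f.ker ↔ H.map f ≤ Subgroup.centralizer (K.map f) := by
  rw [← Subgroup.map_eq_bot_iff, Subgroup.map_commutator,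
    Subgroup.commutator_eq_bot_iff_le_centralizer]

-- A set and its closure have the same centralizer; this is applied to the images in `G ⧸ N`.
theorem commutator_closure_le_iff {G : Type*} [Group G] {S T : Set G} {N : Subgroup G}
    [N.Normal] :
    ⁅Subgroup.closure S, Subgroup.closure T⁆ ≤ N ↔ ∀ s ∈ S, ∀ t ∈ T, ⁅s, t⁆ ∈ N := by
  let π := QuotientGroup.mk' N
  have mem_iff_commute (s t : G) : ⁅s, t⁆ ∈ N ↔ π t * π s = π s * π t := by
    rw [← QuotientGroup.eq_one_iff, ← QuotientGroup.mk'_apply, map_commutatorElement,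
      commutatorElement_eq_one_iff_mul_comm, eq_comm]
  calc ⁅Subgroup.closure S, Subgroup.closure T⁆ ≤ N
    _ ↔ (Subgroup.closure S).map π ≤ Subgroup.centralizer ((Subgroup.closure T).map π) := by
      rw [← commutator_le_ker_iff, QuotientGroup.ker_mk']
    _ ↔ π '' S ⊆ Subgroup.centralizer (π '' T) := by
      rw [MonoidHom.map_closure, MonoidHom.map_closure, Subgroup.centralizer_closure,
        Subgroup.closure_le]
    _ ↔ ∀ s ∈ S, ∀ t ∈ T, ⁅s, t⁆ ∈ N := by
      simp only [Set.subset_def, SetLike.mem_coe, Subgroup.mem_centralizer_iff,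
        Set.forall_mem_image, mem_iff_commute]

theorem commutator_closure_pair_le_iff {G : Type*} [Group G] {x y : G} {N : Subgroup G}
    [N.Normal] :
    ⁅Subgroup.closure {x, y}, Subgroup.closure {x, y}⁆ ≤ N ↔ ⁅x, y⁆ ∈ N := by
  have mem_swap : ⁅y, x⁆ ∈ N ↔ ⁅x, y⁆ ∈ N := by
    rw [← commutatorElement_inv, inv_mem_iff]
  simp [commutator_closure_le_iff, mem_swap]

/- STATEMENT 13: if a group `G` is generated by two elements `x` and `y`, then the
commutator subgroup of `G` equals the normal closure of the single commutator `⁅x, y⁆`. -/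
theorem stmt_13 {G : Type*} [Group G] (x y : G)
    (h : Subgroup.closure ({x, y} : Set G) = ⊤) :
    commutator G = Subgroup.normalClosure ({⁅x, y⁆} : Set G) := by
  have commutator_le_iff (N : Subgroup G) [N.Normal] : commutator G ≤ N ↔ ⁅x, y⁆ ∈ N := by
    rw [commutator_def, ← h, commutator_closure_pair_le_iff]
  apply le_antisymm
  · exact (commutator_le_iff _).2 (Subgroup.subset_normalClosure rfl)
  · exact Subgroup.normalClosure_le_normal
      (Set.singleton_subset_iff.2 ((commutator_le_iff _).1 le_rfl))
end

section
/- Let K be a separably closed field and let E be a finite Galois extension of the field K((z)) of formal Laurent series over K, of degree m, where m is invertible in K (i.e., the characteristic of K does not divide m). Then there is a ring isomorphism from E onto the Laurent series field K((t)) whose restriction to K((z)) is the K-algebra embedding K((z)) → K((t)) that acts as the identity on coefficients and sends z to t^m. In particular, every finite Galois extension of K((z)) of degree prime to the characteristic embeds into the field of Puiseux series ∪_{m≥1} K((z^{1/m})). -/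
/-!
Since `m` is invertible, `E` is separable over `K((z))`, so the integral closure `B` of `K⟦z⟧` in
`E` is a finite `K⟦z⟧`-module, hence `z`-adically complete. Idempotents of `B ⧸ zB` lift to the
domain `B` by Hensel's lemma, so `B` is local, and therefore a complete discrete valuation ring.
The degree of its residue field over `K` divides `m`, hence is prime to the characteristic, and so
equals `1` because `K` is separably closed. Thus `B` is totally ramified: `z = u * π ^ m` with `u`
a unit. Hensel's lemma extracts an `m`-th root of `u`, which gives `p : E` with `p ^ m = z`. As
`Y ^ m - z` is Eisenstein, `E = K((z))(p)`, and `K((t))` is in the same way generated over `K((z))`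
by the `m`-th root `t` of `z`.
-/

open IsLocalRing Module Polynomial
open scoped LaurentSeries PowerSeries

/-! ### Separably closed fields -/

theorem isSeparable_of_natCast_finrank_ne_zero (F E : Type*) [Field F] [Field E] [Algebra F E]
    [FiniteDimensional F E] (h : (finrank F E : F) ≠ 0) : Algebra.IsSeparable F E := by
  obtain ⟨q, hq⟩ := ExpChar.exists F
  obtain ⟨n, hn⟩ := finInsepDegree_eq_pow F E q
  rw [← Field.finSepDegree_mul_finInsepDegree F E, hn, Nat.cast_mul, Nat.cast_pow] at h
  rw [isSeparable_iff_finInsepDegree_eq_one, hn]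
  cases hq with
  | zero => exact one_pow n
  | prime hprime =>
    have hn0 : n = 0 := by
      by_contra hn0
      exact right_ne_zero_of_mul h (by rw [CharP.cast_eq_zero, zero_pow hn0])
    rw [hn0, pow_zero]

theorem isSepClosed_of_ringEquiv {k l : Type*} [Field k] [Field l] [IsSepClosed k] (e : k ≃+* l) :
    IsSepClosed l := by
  refine IsSepClosed.of_exists_root l fun f _ hirr hsep => ?_
  obtain ⟨x, hx⟩ :=
    IsSepClosed.exists_eval₂_eq_zero e.symm.toRingHom f hirr.degree_pos.ne' hsep
  obtain ⟨y, rfl⟩ := e.symm.surjective x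
  exact ⟨y, e.symm.injective <| by rw [map_zero, ← hx]; exact (eval₂_hom e.symm.toRingHom y).symm⟩

/-! ### Adic completeness -/

theorem isAdicComplete_of_finite {A : Type*} [CommRing A] [IsNoetherianRing A] (I : Ideal A)
    [IsAdicComplete I A] (M : Type*) [AddCommGroup M] [Module A M] [Module.Finite A M] :
    IsAdicComplete I M := by
  have : IsHausdorff I M := IsHausdorff.of_le_jacobson I M (IsAdicComplete.le_jacobson_bot I)
  have : IsPrecomplete I M := by
    rw [← AdicCompletion.of_surjective_iff]
    intro y
    obtain ⟨x, rfl⟩ := AdicCompletion.ofTensorProduct_surjective_of_finite I M y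
    induction x with
    | zero => exact ⟨0, by simp only [map_zero]⟩
    | add x y hx hy =>
      obtain ⟨a, ha⟩ := hx
      obtain ⟨b, hb⟩ := hy
      exact ⟨a + b, by rw [map_add, map_add, ha, hb]⟩
    | tmul r x =>
      obtain ⟨a, rfl⟩ := AdicCompletion.of_surjective I A r
      refine ⟨a • x, ?_⟩
      rw [AdicCompletion.ofTensorProduct_tmul]
      rfl
  exact ⟨⟩

theorem isAdicComplete_map_algebraMap_of_finite {A : Type*} [CommRing A] [IsNoetherianRing A]
    (I : Ideal A) [IsAdicComplete I A] (B : Type*) [CommRing B] [Algebra A B] [Module.Finite A B] :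
    IsAdicComplete (I.map (algebraMap A B)) B :=
  (IsAdicComplete.map_algebraMap_iff _ _).2 (isAdicComplete_of_finite I B)

theorem isAdicComplete_of_pow {A : Type*} [CommRing A] {I : Ideal A} {n : ℕ} (hn : n ≠ 0)
    [h : IsAdicComplete (I ^ n) A] : IsAdicComplete I A := by
  let : WithIdeal A := ⟨I⟩
  have hI : IsAdic I := rfl
  rw [hI.isAdicComplete_iff]
  exact ((is_ideal_adic_pow hI hn.pos).isAdicComplete_iff).1 h

/-! ### Hensel's lemma -/

theorem isLocalRing_of_isArtinianRing_of_forall_isIdempotentElem {R : Type*} [CommRing R]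
    [IsArtinianRing R] [Nontrivial R] (h : ∀ e : R, IsIdempotentElem e → e = 0 ∨ e = 1) :
    IsLocalRing R := by
  refine IsLocalRing.of_isUnit_or_isUnit_one_sub_self fun x => ?_
  obtain ⟨n, y, hy⟩ := IsArtinian.exists_pow_succ_smul_dvd x (1 : R)
  simp only [smul_eq_mul, mul_one] at hy
  have hpow : ∀ j, x ^ n = x ^ (n + j) * y ^ j := by
    intro j
    induction j with
    | zero => simp
    | succ j ih =>
      calc x ^ n = (x ^ (n + 1) * y) * x ^ j * y ^ j := by rw [hy, ← pow_add, ← ih]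
        _ = x ^ (n + (j + 1)) * y ^ (j + 1) := by ring
  -- `x ^ n * y ^ n` generates the stable ideal of the chain `(x) ⊇ (x ^ 2) ⊇ ⋯`.
  have hidem : IsIdempotentElem (x ^ n * y ^ n) := by
    calc x ^ n * y ^ n * (x ^ n * y ^ n) = x ^ (n + n) * y ^ n * y ^ n := by ring
      _ = x ^ n * y ^ n := by rw [← hpow]
  rcases h _ hidem with h0 | h1
  · right
    have hx : x ^ n = 0 := by
      rw [hpow n, pow_add, mul_assoc, h0, mul_zero]
    exact IsNilpotent.isUnit_one_sub ⟨n, hx⟩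
  · left
    have hxn : IsUnit (x ^ n) := .of_mul_eq_one _ h1
    exact .of_mul_eq_one y (hxn.mul_left_cancel (by rw [← mul_assoc, ← pow_succ, hy, mul_one]))

theorem exists_isIdempotentElem_mk_eq {B : Type*} [CommRing B] (J : Ideal B) [HenselianRing B J]
    {e : B ⧸ J} (he : IsIdempotentElem e) :
    ∃ a : B, IsIdempotentElem a ∧ Ideal.Quotient.mk J a = e := by
  obtain ⟨b, rfl⟩ := Ideal.Quotient.mk_surjective e
  have hmonic : (X ^ 2 - X : B[X]).Monic := by monicity!
  have hroot : (X ^ 2 - X : B[X]).eval b ∈ J := by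
    rw [← Ideal.Quotient.eq_zero_iff_mem]
    simp only [eval_sub, eval_pow, eval_X, map_sub, map_pow, he.pow_succ_eq 1, sub_self]
  have hderiv : IsUnit (Ideal.Quotient.mk J ((X ^ 2 - X : B[X]).derivative.eval b)) := by
    have heval : (X ^ 2 - X : B[X]).derivative.eval b = 2 * b - 1 := by
      simp [one_add_one_eq_two]
    -- `(2 * e - 1) ^ 2 = 1` for every idempotent `e`.
    refine .of_mul_eq_one (2 * Ideal.Quotient.mk J b - 1) ?_
    rw [heval, map_sub, map_mul, map_ofNat, map_one]
    linear_combination 4 * he.eq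
  obtain ⟨a, ha, hab⟩ := HenselianRing.is_henselian _ hmonic b hroot hderiv
  refine ⟨a, ?_, Ideal.Quotient.eq.2 hab⟩
  simpa [IsIdempotentElem, IsRoot.def, sq, sub_eq_zero] using ha

theorem isLocalRing_of_henselianRing_of_isArtinianRing_quotient {B : Type*} [CommRing B]
    [IsDomain B] (J : Ideal B) [HenselianRing B J] [IsArtinianRing (B ⧸ J)] : IsLocalRing B := by
  have : Nontrivial (B ⧸ J) := by
    refine Ideal.Quotient.nontrivial_iff.2 (ne_top_of_le_ne_top ?_ (HenselianRing.jac (I := J)))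
    exact mt Ideal.jacobson_eq_top_iff.1 bot_ne_top
  have : IsLocalRing (B ⧸ J) := by
    refine isLocalRing_of_isArtinianRing_of_forall_isIdempotentElem fun e he => ?_
    obtain ⟨a, ha, rfl⟩ := exists_isIdempotentElem_mk_eq J he
    rcases IsIdempotentElem.iff_eq_zero_or_one.1 ha with rfl | rfl
    · exact .inl (map_zero _)
    · exact .inr (map_one _)
  have := isLocalHom_of_le_jacobson_bot J HenselianRing.jac
  exact RingHom.domain_isLocalRing (Ideal.Quotient.mk J)

theorem henselianLocalRing_of_isAdicComplete (B : Type*) [CommRing B] [IsLocalRing B]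
    [IsAdicComplete (maximalIdeal B) B] : HenselianLocalRing B :=
  { is_henselian := fun f hf a h hu => HenselianRing.is_henselian f hf a h (hu.map _) }

theorem exists_pow_eq_of_isUnit {B : Type*} [CommRing B] [HenselianLocalRing B]
    [IsSepClosed (ResidueField B)] {m : ℕ} (hm : (m : ResidueField B) ≠ 0) {u : B}
    (hu : IsUnit u) : ∃ s : B, s ^ m = u := by
  have : NeZero (m : ResidueField B) := ⟨hm⟩
  have hm0 : m ≠ 0 := by rintro rfl; exact hm Nat.cast_zero
  obtain ⟨x, hx⟩ := IsSepClosed.exists_pow_nat_eq (residue B u) m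
  obtain ⟨a, rfl⟩ := residue_surjective x
  have hroot : (X ^ m - C u).eval a ∈ maximalIdeal B := by
    rw [← residue_eq_zero_iff]
    simp only [eval_sub, eval_pow, eval_X, eval_C, map_sub, map_pow, hx, sub_self]
  have hderiv : IsUnit ((X ^ m - C u).derivative.eval a) := by
    have ha : residue B a ≠ 0 := by
      intro ha
      rw [ha, zero_pow hm0, eq_comm, residue_eq_zero_iff] at hx
      exact hx hu
    have heval : (X ^ m - C u).derivative.eval a = m * a ^ (m - 1) := by simp [derivative_X_pow]
    rw [← residue_ne_zero_iff_isUnit, heval, map_mul, map_natCast, map_pow]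
    exact mul_ne_zero hm (pow_ne_zero _ ha)
  obtain ⟨s, hs, -⟩ :=
    HenselianLocalRing.is_henselian _ (monic_X_pow_sub_C u hm0) a hroot hderiv
  exact ⟨s, by simpa [IsRoot.def, sub_eq_zero] using hs⟩

/-! ### Finite extensions of complete discrete valuation rings -/

theorem isLocalRing_of_finite (A B : Type*) [CommRing A] [IsLocalRing A] [IsNoetherianRing A]
    [IsAdicComplete (maximalIdeal A) A] [CommRing B] [IsDomain B] [Algebra A B]
    [Module.Finite A B] : IsLocalRing B := by
  let J := (maximalIdeal A).map (algebraMap A B)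
  have : IsAdicComplete J B := isAdicComplete_map_algebraMap_of_finite _ B
  have : IsArtinianRing (A ⧸ maximalIdeal A) := inferInstanceAs (IsArtinianRing (ResidueField A))
  have : IsArtinianRing (B ⧸ J) := .of_finite (A ⧸ maximalIdeal A) (B ⧸ J)
  exact isLocalRing_of_henselianRing_of_isArtinianRing_quotient J

theorem isDiscreteValuationRing_of_finite (A B : Type*) [CommRing A] [IsDomain A]
    [IsDiscreteValuationRing A] [IsAdicComplete (maximalIdeal A) A] [CommRing B]
    [IsDedekindDomain B] [Algebra A B] [FaithfulSMul A B] [Module.Finite A B] :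
    IsDiscreteValuationRing B := by
  have := isLocalRing_of_finite A B
  have hB : ¬ IsField B := fun h => IsDiscreteValuationRing.not_isField A
    (isField_of_isIntegral_of_isField (FaithfulSMul.algebraMap_injective A B) h)
  have hTFAE : IsDiscreteValuationRing B ↔ IsDedekindDomain B :=
    (IsDiscreteValuationRing.TFAE B hB).out 0 2
  exact hTFAE.2 inferInstance

theorem primesOver_maximalIdeal_eq_singleton (A B : Type*) [CommRing A] [IsLocalRing A]
    [CommRing B] [IsLocalRing B] [Algebra A B] [Algebra.IsIntegral A B] [FaithfulSMul A B] :
    (maximalIdeal A).primesOver B = {maximalIdeal B} := by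
  ext P
  constructor
  · rintro ⟨hP, hover⟩
    exact eq_maximalIdeal (Ideal.IsMaximal.of_liesOver_isMaximal P (maximalIdeal A))
  · rintro rfl
    exact ⟨inferInstance, inferInstance⟩

section TotallyRamified

variable (A B : Type*) [CommRing A] [IsDomain A] [IsDiscreteValuationRing A]
  [CommRing B] [IsDomain B] [IsDiscreteValuationRing B] [Algebra A B] [FaithfulSMul A B]
  [Module.Finite A B]

theorem map_maximalIdeal_eq_pow_ramificationIdx :
    (maximalIdeal A).map (algebraMap A B) =
      maximalIdeal B ^ (maximalIdeal B).ramificationIdx A := by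
  have hne : (maximalIdeal A).map (algebraMap A B) ≠ ⊥ :=
    Ideal.map_ne_bot_of_ne_bot (IsDiscreteValuationRing.not_a_field A)
  obtain ⟨e, he⟩ := exists_maximalIdeal_pow_eq_of_principal B inferInstance _ hne
  have hprime : Prime (maximalIdeal B) :=
    Ideal.prime_of_isPrime (IsDiscreteValuationRing.not_a_field B) inferInstance
  rw [Ideal.IsDedekindDomain.ramificationIdx_eq_multiplicity _ _ hne, he,
    multiplicity_pow_self hprime.ne_zero hprime.not_isUnit]

theorem isAdicComplete_maximalIdeal_of_finite [IsAdicComplete (maximalIdeal A) A] :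
    IsAdicComplete (maximalIdeal B) B := by
  have : IsAdicComplete (maximalIdeal B ^ (maximalIdeal B).ramificationIdx A) B :=
    map_maximalIdeal_eq_pow_ramificationIdx A B ▸ isAdicComplete_map_algebraMap_of_finite _ B
  exact isAdicComplete_of_pow ((maximalIdeal B).ramificationIdx_pos A).ne'

theorem ramificationIdx_mul_finrank_residueField :
    (maximalIdeal B).ramificationIdx A * finrank (ResidueField A) (ResidueField B) =
      finrank A B := by
  have hprimes := primesOver_maximalIdeal_eq_singleton A B
  let : Unique ((maximalIdeal A).primesOver B) :=
    { default := ⟨maximalIdeal B, hprimes.superset rfl⟩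
      uniq := fun P => Subtype.ext (hprimes.subset P.2) }
  have hsum := Ideal.sum_ramification_inertia_eq_finrank (maximalIdeal A) B
  rw [Fintype.sum_unique] at hsum
  rw [← hsum]
  exact congrArg _ (Ideal.inertiaDeg_eq_of_isMaximal (maximalIdeal A) (maximalIdeal B)).symm

variable [IsSepClosed (ResidueField A)]

theorem bijective_algebraMap_residueField_of_natCast_ne_zero
    (h : (finrank A B : ResidueField A) ≠ 0) :
    Function.Bijective (algebraMap (ResidueField A) (ResidueField B)) := by
  rw [← ramificationIdx_mul_finrank_residueField A B, Nat.cast_mul] at h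
  have := isSeparable_of_natCast_finrank_ne_zero _ _ (right_ne_zero_of_mul h)
  exact IsSepClosed.algebraMap_bijective (ResidueField A) (ResidueField B)

theorem ramificationIdx_eq_finrank_of_natCast_ne_zero (h : (finrank A B : ResidueField A) ≠ 0) :
    (maximalIdeal B).ramificationIdx A = finrank A B := by
  have hf : finrank (ResidueField A) (ResidueField B) = 1 :=
    Algebra.finrank_eq_one_iff_bijective_algebraMap.2
      (bijective_algebraMap_residueField_of_natCast_ne_zero A B h)
  rw [← ramificationIdx_mul_finrank_residueField A B, hf, mul_one]

variable {A}

theorem exists_isUnit_mul_pow_eq_algebraMap (h : (finrank A B : ResidueField A) ≠ 0) {ϖ : A}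
    (hϖ : Irreducible ϖ) :
    ∃ π u : B, IsUnit u ∧ u * π ^ finrank A B = algebraMap A B ϖ := by
  obtain ⟨π, hπ⟩ := IsDiscreteValuationRing.exists_irreducible B
  have hspan : Ideal.span {π ^ finrank A B} = Ideal.span {algebraMap A B ϖ} := by
    rw [← Ideal.span_singleton_pow, ← hπ.maximalIdeal_eq,
      ← ramificationIdx_eq_finrank_of_natCast_ne_zero A B h,
      ← map_maximalIdeal_eq_pow_ramificationIdx, hϖ.maximalIdeal_eq, Ideal.map_span,
      Set.image_singleton]
  obtain ⟨u, hu⟩ := Ideal.span_singleton_eq_span_singleton.1 hspan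
  exact ⟨π, u, u.isUnit, by rw [mul_comm, hu]⟩

theorem exists_pow_finrank_eq_algebraMap [IsAdicComplete (maximalIdeal A) A]
    (h : (finrank A B : ResidueField A) ≠ 0) {ϖ : A} (hϖ : Irreducible ϖ) :
    ∃ p : B, p ^ finrank A B = algebraMap A B ϖ := by
  have := isAdicComplete_maximalIdeal_of_finite A B
  have := henselianLocalRing_of_isAdicComplete B
  have : IsSepClosed (ResidueField B) :=
    isSepClosed_of_ringEquiv (RingEquiv.ofBijective _
      (bijective_algebraMap_residueField_of_natCast_ne_zero A B h))
  have hB : (finrank A B : ResidueField B) ≠ 0 := by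
    rw [← map_natCast (algebraMap (ResidueField A) (ResidueField B))]
    exact (_root_.map_ne_zero _).2 h
  obtain ⟨π, u, hu, huπ⟩ := exists_isUnit_mul_pow_eq_algebraMap B h hϖ
  obtain ⟨s, rfl⟩ := exists_pow_eq_of_isUnit hB hu
  exact ⟨s * π, by rw [mul_pow, huπ]⟩

end TotallyRamified

theorem natCast_ne_zero_of_residueField {A : Type*} [CommRing A] [IsLocalRing A] {n : ℕ}
    (h : (n : ResidueField A) ≠ 0) : (n : A) ≠ 0 := fun h0 =>
  h (by rw [← map_natCast (residue A), h0, map_zero])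

theorem exists_pow_finrank_eq_algebraMap_of_isFractionRing {A F E : Type*} [CommRing A] [IsDomain A]
    [IsDiscreteValuationRing A] [IsAdicComplete (maximalIdeal A) A] [IsSepClosed (ResidueField A)]
    [Field F] [Algebra A F] [IsFractionRing A F] [Field E] [Algebra F E] [Algebra A E]
    [IsScalarTower A F E] [FiniteDimensional F E] (h : (finrank F E : ResidueField A) ≠ 0)
    {ϖ : A} (hϖ : Irreducible ϖ) : ∃ p : E, p ^ finrank F E = algebraMap A E ϖ := by
  have hF : (finrank F E : F) ≠ 0 := by
    rw [← map_natCast (algebraMap A F)]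
    exact (map_ne_zero_iff _ (IsFractionRing.injective A F)).2 (natCast_ne_zero_of_residueField h)
  have := isSeparable_of_natCast_finrank_ne_zero F E hF
  let B := integralClosure A E
  have : IsDedekindDomain B := integralClosure.isDedekindDomain A F E
  have : Module.Finite A B := IsIntegralClosure.finite A F E B
  have : IsFractionRing B E := integralClosure.isFractionRing_of_finite_extension F E
  have : FaithfulSMul A F := IsFractionRing.instFaithfulSMul A F
  have : FaithfulSMul A E := .trans A F E
  have := isDiscreteValuationRing_of_finite A B
  rw [IsFractionRing.finrank_eq A F B E] at h ⊢
  obtain ⟨p, hp⟩ := exists_pow_finrank_eq_algebraMap B h hϖ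
  refine ⟨algebraMap B E p, ?_⟩
  rw [← map_pow, hp, ← IsScalarTower.algebraMap_apply]

/-! ### Field extensions generated by a radical -/

theorem irreducible_X_pow_sub_C_of_prime (A F : Type*) [CommRing A] [IsDomain A]
    [IsIntegrallyClosed A] [Field F] [Algebra A F] [IsFractionRing A F] {n : ℕ} (hn : n ≠ 0)
    {ϖ : A} (hϖ : Prime ϖ) :
    Irreducible (X ^ n - C (algebraMap A F ϖ)) := by
  have hmonic : (X ^ n - C ϖ).Monic := monic_X_pow_sub_C ϖ hn
  have hprime : (Ideal.span {ϖ}).IsPrime := (Ideal.span_singleton_prime hϖ.ne_zero).2 hϖ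
  have heis : (X ^ n - C ϖ).IsEisensteinAt (Ideal.span {ϖ}) := by
    refine hmonic.isEisensteinAt_of_mem_of_notMem hprime.ne_top (fun {i} hi => ?_) ?_
    · rw [natDegree_X_pow_sub_C] at hi
      rw [coeff_sub, coeff_X_pow, if_neg hi.ne, zero_sub, neg_mem_iff, coeff_C]
      split_ifs with h0
      · exact Ideal.mem_span_singleton_self ϖ
      · exact zero_mem _
    · rw [coeff_sub, coeff_X_pow, if_neg hn.symm, zero_sub, neg_mem_iff, coeff_C_zero,
        Ideal.span_singleton_pow, Ideal.mem_span_singleton]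
      exact fun hdvd => hϖ.not_isUnit (hϖ.squarefree ϖ (sq ϖ ▸ hdvd))
  have hirr : Irreducible (X ^ n - C ϖ) :=
    heis.irreducible hprime hmonic.isPrimitive (by rw [natDegree_X_pow_sub_C]; exact hn.pos)
  rw [hmonic.irreducible_iff_irreducible_map_fraction_map (K := F)] at hirr
  simpa using hirr

theorem bijective_adjoinRoot_lift_of_finrank_eq {F E : Type*} [Field F] [Field E] [Algebra F E]
    {f : F[X]} (hf : Irreducible f) {p : E} (hp : eval₂ (algebraMap F E) p f = 0)
    (h : finrank F E = f.natDegree) :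
    Function.Bijective (AdjoinRoot.lift (algebraMap F E) p hp) := by
  have := Fact.mk hf
  have hinj := (AdjoinRoot.lift (algebraMap F E) p hp).injective
  have : FiniteDimensional F E := .of_finrank_pos (h ▸ hf.natDegree_pos)
  have : FiniteDimensional F (AdjoinRoot f) := (AdjoinRoot.powerBasis hf.ne_zero).finite
  let l : AdjoinRoot f →ₐ[F] E := AdjoinRoot.liftAlgHom f (Algebra.ofId F E) p hp
  have hrank : finrank F (AdjoinRoot f) = finrank F E := by
    rw [h]; exact finrank_quotient_span_eq_natDegree
  exact ⟨hinj, (LinearMap.injective_iff_surjective_of_finrank_eq_finrank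
    (f := l.toLinearMap) hrank).1 hinj⟩

theorem exists_ringEquiv_of_eval₂_eq_zero {F E T : Type*} [Field F] [Field E] [Algebra F E]
    [Field T] (φ : F →+* T) {f : F[X]} (hf : Irreducible f) {p : E}
    (hp : eval₂ (algebraMap F E) p f = 0) (h : finrank F E = f.natDegree) {t : T}
    (ht : eval₂ φ t f = 0) (hφt : Function.Surjective (eval₂ φ t)) :
    ∃ e : E ≃+* T, ∀ x, e (algebraMap F E x) = φ x := by
  have := Fact.mk hf
  let eE := RingEquiv.ofBijective _ (bijective_adjoinRoot_lift_of_finrank_eq hf hp h)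
  have hsurj : Function.Surjective (AdjoinRoot.lift φ t ht) := fun y => by
    obtain ⟨q, rfl⟩ := hφt y
    exact ⟨AdjoinRoot.mk f q, AdjoinRoot.lift_mk ht q⟩
  let eT := RingEquiv.ofBijective (AdjoinRoot.lift φ t ht) ⟨RingHom.injective _, hsurj⟩
  refine ⟨eE.symm.trans eT, fun x => ?_⟩
  have hx : eE.symm (algebraMap F E x) = AdjoinRoot.of f x :=
    eE.symm_apply_eq.2 (AdjoinRoot.lift_of hp).symm
  rw [RingEquiv.trans_apply, hx]
  exact AdjoinRoot.lift_of ht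

/-! ### The substitution `z ↦ t ^ m` on Laurent series -/

section LaurentExpand

variable {R : Type*} [CommSemiring R]

theorem coeff_mul_single_one_pow (f : R⸨X⸩) (i : ℕ) (j : ℤ) :
    (f * HahnSeries.single 1 1 ^ i).coeff j = f.coeff (j - i) := by
  rw [HahnSeries.single_pow, one_pow, nsmul_one]
  simpa using HahnSeries.coeff_mul_single_add (x := f) (r := (1 : R)) (a := j - i) (b := i)

variable (m : ℕ) [NeZero m]

/-- The substitution `z ↦ t ^ m`, that is, the embedding `R((z)) → R((t))` over `R` along which
`R((t))` is obtained from `R((z))` by adjoining an `m`-th root of `z`. Both rings are encoded as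
`R⸨X⸩`. -/
noncomputable def laurentExpand : R⸨X⸩ →+* R⸨X⸩ :=
  HahnSeries.embDomainRingHom (AddMonoidHom.mulLeft (m : ℤ))
    (mul_right_injective₀ (NeZero.ne (m : ℤ)))
    (fun _ _ => mul_le_mul_iff_right₀ (Nat.cast_pos.2 (NeZero.pos m)))

theorem coeff_laurentExpand_mul (f : R⸨X⸩) (k : ℤ) :
    (laurentExpand m f).coeff (m * k) = f.coeff k :=
  HahnSeries.embDomain_coeff

theorem coeff_laurentExpand_of_not_dvd (f : R⸨X⸩) {j : ℤ} (hj : ¬ (m : ℤ) ∣ j) :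
    (laurentExpand m f).coeff j = 0 :=
  HahnSeries.embDomain_of_notMem_range <| by
    rintro ⟨k, rfl⟩
    exact hj ⟨k, rfl⟩

theorem laurentExpand_single (k : ℤ) (a : R) :
    laurentExpand m (HahnSeries.single k a) = HahnSeries.single (m * k) a :=
  HahnSeries.embDomain_single

theorem bddBelow_support_coeff_mul_add (r : ℤ) (f : R⸨X⸩) :
    BddBelow (Function.support fun k : ℤ => f.coeff (m * k + r)) := by
  refine ⟨(f.order - r) / m, fun k hk => ?_⟩
  have horder : f.order ≤ m * k + r := HahnSeries.order_le_of_coeff_ne_zero hk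
  exact Int.ediv_le_of_le_mul (Nat.cast_pos.2 (NeZero.pos m)) (by linarith)

/-- The section of `f` at the residue `r` modulo `m`: the series `∑ k, f_(m * k + r) z ^ k`. The
sections for `0 ≤ r < m` are the coordinates of `f` in the basis `1, t, …, t ^ (m - 1)` of `R((t))`
over `R((z))`. -/
noncomputable def laurentSection (r : ℤ) (f : R⸨X⸩) : R⸨X⸩ :=
  HahnSeries.ofSuppBddBelow (fun k => f.coeff (m * k + r)) (bddBelow_support_coeff_mul_add m r f)

theorem coeff_laurentSection (r : ℤ) (f : R⸨X⸩) (k : ℤ) :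
    (laurentSection m r f).coeff k = f.coeff (m * k + r) :=
  rfl

theorem sum_laurentExpand_laurentSection (f : R⸨X⸩) :
    ∑ i ∈ Finset.range m, laurentExpand m (laurentSection m i f) * HahnSeries.single 1 1 ^ i =
      f := by
  ext j
  obtain ⟨q, r, hr, rfl⟩ : ∃ (q : ℤ) (r : ℕ), r < m ∧ j = m * q + r := by
    have hm : 0 < (m : ℤ) := Nat.cast_pos.2 (NeZero.pos m)
    lift j % m to ℕ using Int.emod_nonneg j hm.ne' with r hr
    refine ⟨j / m, r, by zify; exact hr ▸ Int.emod_lt_of_pos j hm, ?_⟩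
    rw [hr, Int.mul_ediv_add_emod]
  rw [HahnSeries.coeff_sum, Finset.sum_eq_single_of_mem r (Finset.mem_range.2 hr)]
  · rw [coeff_mul_single_one_pow, add_sub_cancel_right, coeff_laurentExpand_mul,
      coeff_laurentSection]
  · intro i hi hir
    rw [coeff_mul_single_one_pow, coeff_laurentExpand_of_not_dvd]
    intro hdvd
    rw [add_sub_assoc, dvd_add_right (dvd_mul_right _ _), ← Nat.modEq_iff_dvd] at hdvd
    exact hir (hdvd.eq_of_lt_of_lt (Finset.mem_range.1 hi) hr)

theorem surjective_eval₂_laurentExpand :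
    Function.Surjective (eval₂ (laurentExpand m) (HahnSeries.single 1 1 : R⸨X⸩)) := fun f =>
  ⟨∑ i ∈ Finset.range m, C (laurentSection m i f) * X ^ i, by
    simp only [eval₂_finsetSum, eval₂_mul, eval₂_C, eval₂_X_pow]
    exact sum_laurentExpand_laurentSection m f⟩

end LaurentExpand

/-! ### Tame extensions of `K((z))` -/

theorem irreducible_X_pow_sub_C_single_one (K : Type*) [Field K] {n : ℕ} (hn : n ≠ 0) :
    Irreducible (X ^ n - C (HahnSeries.single 1 1 : K⸨X⸩)) := by
  rw [← HahnSeries.ofPowerSeries_X]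
  exact irreducible_X_pow_sub_C_of_prime K⟦X⟧ K⸨X⸩ hn PowerSeries.X_prime

theorem exists_pow_finrank_eq_algebraMap_single_one {K E : Type*} [Field K] [IsSepClosed K]
    [Field E] [Algebra K⸨X⸩ E] [FiniteDimensional K⸨X⸩ E] (h : (finrank K⸨X⸩ E : K) ≠ 0) :
    ∃ p : E, p ^ finrank K⸨X⸩ E = algebraMap K⸨X⸩ E (HahnSeries.single 1 1) := by
  let : Algebra K⟦X⟧ E := ((algebraMap K⸨X⸩ E).comp (algebraMap K⟦X⟧ K⸨X⸩)).toAlgebra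
  have : IsScalarTower K⟦X⟧ K⸨X⸩ E := .of_algebraMap_eq' rfl
  have : IsAdicComplete (maximalIdeal K⟦X⟧) K⟦X⟧ := by
    rw [PowerSeries.maximalIdeal_eq_span_X]
    infer_instance
  have : IsSepClosed (ResidueField K⟦X⟧) :=
    isSepClosed_of_ringEquiv PowerSeries.residueFieldOfPowerSeries.symm
  have hres : (finrank K⸨X⸩ E : ResidueField K⟦X⟧) ≠ 0 := by
    rw [← map_natCast (PowerSeries.residueFieldOfPowerSeries (k := K)).symm]
    exact (_root_.map_ne_zero _).2 h
  obtain ⟨p, hp⟩ :=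
    exists_pow_finrank_eq_algebraMap_of_isFractionRing hres
      (PowerSeries.X_prime (R := K)).irreducible
  exact ⟨p, by rw [hp, ← HahnSeries.ofPowerSeries_X]; rfl⟩

theorem exists_ringEquiv_algebraMap_eq_laurentExpand {K E : Type*} [Field K] [IsSepClosed K]
    [Field E] [Algebra K⸨X⸩ E] {m : ℕ} [NeZero m] (hm : (m : K) ≠ 0)
    (hdeg : finrank K⸨X⸩ E = m) :
    ∃ e : E ≃+* K⸨X⸩, ∀ f : K⸨X⸩, e (algebraMap K⸨X⸩ E f) = laurentExpand m f := by
  have : FiniteDimensional K⸨X⸩ E := .of_finrank_pos (hdeg ▸ NeZero.pos m)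
  obtain ⟨p, hp⟩ := exists_pow_finrank_eq_algebraMap_single_one (hdeg ▸ hm)
  rw [hdeg] at hp
  refine exists_ringEquiv_of_eval₂_eq_zero (laurentExpand m)
    (irreducible_X_pow_sub_C_single_one K (NeZero.ne m)) (p := p) ?_ ?_ ?_
    (surjective_eval₂_laurentExpand m)
  · rw [eval₂_sub, eval₂_X_pow, eval₂_C, hp, sub_self]
  · rw [natDegree_X_pow_sub_C, hdeg]
  · rw [eval₂_sub, eval₂_X_pow, eval₂_C, laurentExpand_single, HahnSeries.single_pow, one_pow,
      nsmul_one, mul_one, sub_self]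

theorem stmt_14_general (K : Type*) [Field K] [IsSepClosed K]
    (E : Type*) [Field E] [Algebra (LaurentSeries K) E]
    (m : ℕ) (hmu : IsUnit (m : K)) (hdeg : Module.finrank (LaurentSeries K) E = m) :
    ∃ e : E ≃+* LaurentSeries K,
      ∀ f : LaurentSeries K,
        (∀ k : ℤ, (e (algebraMap (LaurentSeries K) E f)).coeff ((m : ℤ) * k) = f.coeff k) ∧
        (∀ j : ℤ, ¬ ((m : ℤ) ∣ j) → (e (algebraMap (LaurentSeries K) E f)).coeff j = 0) := by
  have : NeZero (m : K) := ⟨hmu.ne_zero⟩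
  have : NeZero m := .of_neZero_natCast K
  obtain ⟨e, he⟩ := exists_ringEquiv_algebraMap_eq_laurentExpand hmu.ne_zero hdeg
  refine ⟨e, fun f => ?_⟩
  rw [he]
  exact ⟨coeff_laurentExpand_mul m f, fun _ => coeff_laurentExpand_of_not_dvd m f⟩

theorem stmt_14 (K : Type*) [Field K] [IsSepClosed K]
    (E : Type*) [Field E] [Algebra (LaurentSeries K) E]
    [FiniteDimensional (LaurentSeries K) E] [IsGalois (LaurentSeries K) E]
    (m : ℕ) (hm : 0 < m) (hmu : IsUnit (m : K))
    (hdeg : Module.finrank (LaurentSeries K) E = m) :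
    ∃ e : E ≃+* LaurentSeries K,
      ∀ f : LaurentSeries K,
        (∀ k : ℤ, (e (algebraMap (LaurentSeries K) E f)).coeff ((m : ℤ) * k) = f.coeff k) ∧
        (∀ j : ℤ, ¬ ((m : ℤ) ∣ j) → (e (algebraMap (LaurentSeries K) E f)).coeff j = 0) :=
  stmt_14_general K E m hmu hdeg
end
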